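/- For every n ≥ 1, Σ_{G ∈ G_{n+1}} y^{unl(G)} t^{impp(G)} = Σ_{T ∈ C_{n+1}} (y+1)^{impe(T)-impp(T)} (y+t)^{impp(T)}, as an identity of polynomials in y and t, where the left sum is over Greg trees of size n+1 rooted at 1 and the right sum is over Cayley trees of size n+1 rooted at 1. -/

import Mathlib

noncomputable section

open MvPolynomial Function

/-! ### The polynomial sequences -/

/-- The generalized Ramanujan polynomials `Q n`, in the variables
`x = X 0`, `y = X 1`, `z = X 2`, `t = X 3`:
`Q 1 = 1` and `Q (n+1) = (x + n z + n (y+t)) Q n + (y+t) y ∂_y (Q n)` for `n ≥ 1`. -/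
def Qpoly : ℕ → MvPolynomial (Fin 4) ℚ
  | 0 => 1
  | 1 => 1
  | n + 2 =>
      (X 0 + C ((n : ℚ) + 1) * X 2 + C ((n : ℚ) + 1) * (X 1 + X 3)) * Qpoly (n + 1)
        + (X 1 + X 3) * (X 1 * pderiv 1 (Qpoly (n + 1)))

/-- `R n (x,y,z,t) = Q n (x, y+1, z, t-1)`. -/
def Rpoly (n : ℕ) : MvPolynomial (Fin 4) ℚ :=
  bind₁ (fun i : Fin 4 => if i = 1 then X 1 + 1 else if i = 3 then X 3 - 1 else X i) (Qpoly n)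

/-- `H 1 = 1` and `H (n+1) = (2n-1+(n+1)y) H n + (1+y)^2 H n'` for `n ≥ 1`. -/
def Hpoly : ℕ → Polynomial ℚ
  | 0 => 1
  | 1 => 1
  | n + 2 =>
      (Polynomial.C (2 * (n : ℚ) + 1) + Polynomial.C ((n : ℚ) + 2) * Polynomial.X)
          * Hpoly (n + 1)
        + (1 + Polynomial.X) ^ 2 * Polynomial.derivative (Hpoly (n + 1))

/-- The Ramanujan polynomials, in the variables `x = X 0`, `y = X 1`:
`P 1 = 1` and `P (n+1) = (x + n + n y) P n + y^2 ∂_y (P n)` for `n ≥ 1`. -/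
def Ppoly : ℕ → MvPolynomial (Fin 2) ℚ
  | 0 => 1
  | 1 => 1
  | n + 2 =>
      (X 0 + C ((n : ℚ) + 1) * (1 + X 1)) * Ppoly (n + 1)
        + X 1 ^ 2 * pderiv 1 (Ppoly (n + 1))

/-- `C 1 = 1` and `C (n+1) = n (1+y) C n + y^2 C n'` for `n ≥ 1`. -/
def Cpoly : ℕ → Polynomial ℚ
  | 0 => 1
  | 1 => 1
  | n + 2 =>
      Polynomial.C ((n : ℚ) + 1) * (1 + Polynomial.X) * Cpoly (n + 1)
        + Polynomial.X ^ 2 * Polynomial.derivative (Cpoly (n + 1))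

/-! ### Cayley trees

A Cayley tree of size `n`, rooted at the vertex with label `1`, is encoded by its parent
function on `Fin n` (vertex `v` carries label `v+1`; the root is the vertex with value `0`).
The root is a fixed point and every vertex reaches the root by iterating the parent map. -/

def CayleyTree (n : ℕ) : Type :=
  {p : Fin n → Fin n //
    (∀ v, v.val = 0 → p v = v) ∧ ∀ v : Fin n, ∃ k, k < n ∧ (p^[k] v).val = 0}

noncomputable instance (n : ℕ) : Fintype (CayleyTree n) := by
  unfold CayleyTree; exact Fintype.ofFinite _

namespace CayleyTree

variable {n : ℕ} (T : CayleyTree n)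

/-- `Desc T v a` : `v` is a descendant of `a` (including `a` itself). -/
def Desc (v a : Fin n) : Prop := ∃ k, T.1^[k] v = a

/-- `β_T(a)` : the smallest label among the descendants of `a`, as a 0-based index. -/
def beta (a : Fin n) : ℕ := sInf {j : ℕ | ∃ v : Fin n, v.val = j ∧ T.Desc v a}

/-- The edge from `c` to its parent is improper: `λ(parent c) > β(c)`. -/
def ImproperEdge (c : Fin n) : Prop := c.val ≠ 0 ∧ T.beta c < (T.1 c).val

/-- The number of improper edges. -/
def impe : ℕ := {c : Fin n | T.ImproperEdge c}.ncard

/-- `a` is an improper parent, i.e. `β_T(a) ≠ λ_T(a)`. -/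
def ImproperParent (a : Fin n) : Prop := T.beta a ≠ a.val

/-- The number of improper parents. -/
def impp : ℕ := {a : Fin n | T.ImproperParent a}.ncard

/-- The degree of the root (= its number of children). -/
def degRoot : ℕ := {c : Fin n | c.val ≠ 0 ∧ (T.1 c).val = 0}.ncard

/-- The length of the greater ancestors path of `i` : the largest `k` such that all the
ancestors `p^[l] i`, `l ≤ k`, have a label `≥ λ(i)`. -/
def bapLen (i : Fin n) : ℕ := Nat.findGreatest (fun k => ∀ l ≤ k, i ≤ T.1^[l] i) n

/-- `i` is a leading vertex: `β_T(a_p) = λ_T(i)` where `a_p` is the top of the greater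
ancestors path of `i`. -/
def Leading (i : Fin n) : Prop := T.beta (T.1^[T.bapLen i] i) = i.val

/-- The number of leading vertices. -/
def lead : ℕ := {i : Fin n | T.Leading i}.ncard

end CayleyTree

/-! ### Greg trees

A Greg tree of size `n`, rooted at the vertex with label `1`, has labelled vertices `Fin n`
(vertex `Sum.inl v` carries label `v+1`) and unlabelled vertices `Fin m`, each of degree at
least `3`.  It is encoded by its parent function.  To make the encoding canonical, the
unlabelled vertices are required to be indexed in increasing order of the pair
`(β, depth)` (this pair is distinct for distinct unlabelled vertices, so every abstract Greg
tree admits exactly one such encoding). -/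

/-- The root: the labelled vertex with label `1` (value `0`). -/
def gregRoot {n m : ℕ} (v : Fin n ⊕ Fin m) : Prop := ∃ w : Fin n, w.val = 0 ∧ v = Sum.inl w

namespace GregRaw

variable {n m : ℕ} (p : Fin n ⊕ Fin m → Fin n ⊕ Fin m)

/-- `v` is a descendant of `a` (including `a` itself). -/
def Desc (v a : Fin n ⊕ Fin m) : Prop := ∃ k, p^[k] v = a

/-- `β(a)` : smallest label among the descendants of `a`, as a 0-based index. -/
def beta (a : Fin n ⊕ Fin m) : ℕ :=
  sInf {j : ℕ | ∃ w : Fin n, w.val = j ∧ Desc p (Sum.inl w) a}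

/-- Distance from `v` to the root. -/
def depth (v : Fin n ⊕ Fin m) : ℕ := sInf {k : ℕ | gregRoot (p^[k] v)}

/-- Sorting key for unlabelled vertices: the pair `(β, depth)` encoded as a number. -/
def key (u : Fin m) : ℕ := beta p (Sum.inr u) * (n + m + 1) + depth p (Sum.inr u)

/-- The set of children of a vertex. -/
def children (a : Fin n ⊕ Fin m) : Set (Fin n ⊕ Fin m) := {w | w ≠ a ∧ p w = a}

end GregRaw

/-- The conditions making a parent function on `Fin n ⊕ Fin m` a (canonically encoded)
Greg tree: the root is a fixed point, every vertex reaches the root, every unlabelled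
vertex has at least two children (hence, having also a parent, degree at least `3`),
and unlabelled vertices are indexed in increasing order of `(β, depth)`. -/
def GregCond (n m : ℕ) (p : Fin n ⊕ Fin m → Fin n ⊕ Fin m) : Prop :=
  (∀ v, gregRoot v → p v = v) ∧
  (∀ v, ∃ k, k < n + m ∧ gregRoot (p^[k] v)) ∧
  (∀ u : Fin m, 2 ≤ (GregRaw.children p (Sum.inr u)).ncard) ∧
  (∀ u w : Fin m, u < w ↔ GregRaw.key p u < GregRaw.key p w)

/-- Greg trees of size `n` rooted at `1`.  (The number of unlabelled vertices of a Greg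
tree with `n` labelled vertices is always at most `n`, so the bound `m ≤ n` does not
exclude any Greg tree.) -/
def GregTree (n : ℕ) : Type :=
  Σ m : Fin (n + 1), {p : Fin n ⊕ Fin m.val → Fin n ⊕ Fin m.val // GregCond n m.val p}

noncomputable instance (n : ℕ) : Fintype (GregTree n) := by
  unfold GregTree; exact Fintype.ofFinite _

namespace GregTree

variable {n : ℕ} (T : GregTree n)

/-- The number of unlabelled vertices. -/
def unl : ℕ := T.1.val

/-- `β_T`. -/
def beta (a : Fin n ⊕ Fin T.1.val) : ℕ := GregRaw.beta T.2.1 a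

/-- The labelled vertex `a` is an improper parent, i.e. `β_T(a) ≠ λ_T(a)`. -/
def ImproperParent (a : Fin n) : Prop := T.beta (Sum.inl a) ≠ a.val

/-- The number of improper parents. -/
def impp : ℕ := {a : Fin n | T.ImproperParent a}.ncard

/-- The degree of the root (= its number of children). -/
def degRoot : ℕ :=
  {w : Fin n ⊕ Fin T.1.val | ¬gregRoot w ∧ gregRoot (T.2.1 w)}.ncard

/-- The length of the greater ancestors path of the labelled vertex `i` : the largest `k`
such that all labelled vertices among the ancestors `p^[l] (inl i)`, `l ≤ k`, have a label
`≥ λ(i)`. -/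
def bapLen (i : Fin n) : ℕ :=
  Nat.findGreatest
    (fun k => ∀ l ≤ k, ∀ j : Fin n, T.2.1^[l] (Sum.inl i) = Sum.inl j → i ≤ j)
    (n + T.1.val)

/-- The labelled vertex `i` is a leading vertex. -/
def Leading (i : Fin n) : Prop := T.beta (T.2.1^[T.bapLen i] (Sum.inl i)) = i.val

/-- The number of leading vertices. -/
def lead : ℕ := {i : Fin n | T.Leading i}.ncard

end GregTree

/-! ### Planar trees

A planar tree of size `n` rooted at `1` is encoded by a parent function together with a
rank function giving each non-root vertex its position (from the left, starting at `0`)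
among the children of its parent; ranks of the children of a fixed vertex form an initial
segment of `ℕ`, so the encoding is canonical. -/

def PlanarTree (n : ℕ) : Type :=
  {pr : (Fin n → Fin n) × (Fin n → Fin n) //
    (∀ v, v.val = 0 → pr.1 v = v) ∧
    (∀ v : Fin n, ∃ k, k < n ∧ (pr.1^[k] v).val = 0) ∧
    (∀ v, v.val = 0 → (pr.2 v).val = 0) ∧
    (∀ c d, c.val ≠ 0 → d.val ≠ 0 → pr.1 c = pr.1 d → pr.2 c = pr.2 d → c = d) ∧
    (∀ c, c.val ≠ 0 → ∀ s : Fin n, s < pr.2 c →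
      ∃ d, d.val ≠ 0 ∧ pr.1 d = pr.1 c ∧ pr.2 d = s)}

noncomputable instance (n : ℕ) : Fintype (PlanarTree n) := by
  unfold PlanarTree; exact Fintype.ofFinite _

namespace PlanarTree

variable {n : ℕ} (T : PlanarTree n)

/-- `β_T(a)` : the smallest label among the descendants of `a`, as a 0-based index. -/
def beta (a : Fin n) : ℕ := sInf {j : ℕ | ∃ v : Fin n, v.val = j ∧ ∃ k, T.1.1^[k] v = a}

/-- `j` is elder: it has a brother to its right with a smaller `β`. -/
def Elder (j : Fin n) : Prop :=
  j.val ≠ 0 ∧ ∃ k : Fin n, k.val ≠ 0 ∧ T.1.1 k = T.1.1 j ∧ T.1.2 j < T.1.2 k ∧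
    T.beta k < T.beta j

/-- The number of elder vertices. -/
def eld : ℕ := {j : Fin n | T.Elder j}.ncard

/-- The edge from `c` to its parent is improper: `c` is a younger child and
`λ(parent c) > β(c)`. -/
def ImproperEdge (c : Fin n) : Prop := c.val ≠ 0 ∧ ¬T.Elder c ∧ T.beta c < (T.1.1 c).val

/-- The number of improper edges. -/
def impe : ℕ := {c : Fin n | T.ImproperEdge c}.ncard

/-- `young_T(i)` : the number of younger children of `i`. -/
def young (i : Fin n) : ℕ := {c : Fin n | c.val ≠ 0 ∧ T.1.1 c = i ∧ ¬T.Elder c}.ncard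

/-- `young_T(1)` : the number of younger children of the root. -/
def youngRoot : ℕ := {c : Fin n | c.val ≠ 0 ∧ (T.1.1 c).val = 0 ∧ ¬T.Elder c}.ncard

end PlanarTree


section families
variable {n : ℕ}

/-- Greg families: the laminar families of label sets of subtrees. -/
structure IsGreg (F : Finset (Finset (Fin (n+1)))) : Prop where
  ne : ∀ A ∈ F, A.Nonempty
  top : Finset.univ ∈ F
  lam : ∀ A ∈ F, ∀ B ∈ F, A ⊆ B ∨ B ⊆ A ∨ Disjoint A B
  zero : ∀ A ∈ F, (0 : Fin (n+1)) ∈ A → A = Finset.univ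
  sep : ∀ a b, a ≠ b → ∃ A ∈ F, ¬ (a ∈ A ↔ b ∈ A)

def Own (F : Finset (Finset (Fin (n+1)))) (A : Finset (Fin (n+1))) (a : Fin (n+1)) : Prop :=
  a ∈ A ∧ ∀ B ∈ F, a ∈ B → A ⊆ B

structure IsCay (F : Finset (Finset (Fin (n+1)))) : Prop extends IsGreg F where
  own : ∀ A ∈ F, ∃ a, Own F A a

def MLt (B A : Finset (Fin (n+1))) : Prop := ∃ y ∈ B, ∀ z ∈ A, y < z

def BadVia (F : Finset (Finset (Fin (n+1)))) (A P : Finset (Fin (n+1))) : Prop :=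
  P ∈ F ∧ A ⊂ P ∧ ∀ x ∈ P, x ∉ A → ∃ B ∈ F, x ∈ B ∧ Disjoint A B ∧ MLt B A

def Bad (F : Finset (Finset (Fin (n+1)))) (A : Finset (Fin (n+1))) : Prop := ∃ P, BadVia F A P

lemma MLt.trans {A B D : Finset (Fin (n+1))} (h1 : MLt A B) (h2 : MLt B D) : MLt A D := by
  obtain ⟨y, hy, h⟩ := h1
  obtain ⟨z, hz, h'⟩ := h2
  exact ⟨y, hy, fun w hw => (h z hz).trans (h' w hw)⟩

lemma MLt.irrefl {A : Finset (Fin (n+1))} (h : MLt A A) : False := by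
  obtain ⟨y, hy, h⟩ := h
  exact lt_irrefl _ (h y hy)

lemma MLt.mono {A A' B B' : Finset (Fin (n+1))} (h : MLt A B) (hA : A ⊆ A') (hB : B' ⊆ B) :
    MLt A' B' := by
  obtain ⟨y, hy, h⟩ := h
  exact ⟨y, hA hy, fun w hw => h w (hB hw)⟩

lemma not_disj {A B : Finset (Fin (n+1))} {x} (h : Disjoint A B) (h1 : x ∈ A) (h2 : x ∈ B) :
    False := Finset.disjoint_left.1 h h1 h2

lemma IsGreg.chain {F : Finset (Finset (Fin (n+1)))} (hF : IsGreg F) {A B x} (hA : A ∈ F) (hB : B ∈ F)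
    (h1 : x ∈ A) (h2 : x ∈ B) : A ⊆ B ∨ B ⊆ A := by
  rcases hF.lam A hA B hB with h | h | h
  · exact Or.inl h
  · exact Or.inr h
  · exact (not_disj h h1 h2).elim

lemma Bad.mono {F T : Finset (Finset (Fin (n+1)))} (h : T ⊆ F) {A} (hA : Bad T A) : Bad F A := by
  obtain ⟨P, hP, h1, h2⟩ := hA
  refine ⟨P, h hP, h1, fun x hx hx' => ?_⟩
  obtain ⟨B, hB, r⟩ := h2 x hx hx'
  exact ⟨B, h hB, r⟩

/-- The owner of the set witnessing badness. -/
lemma BadVia.own_mem {T : Finset (Finset (Fin (n+1)))} {A P d} (hA : BadVia T A P)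
    (hne : A.Nonempty) (hd : Own T P d) : d ∈ A := by
  by_contra hdA
  obtain ⟨hP, h1, h2⟩ := hA
  obtain ⟨B, hB, hdB, hdis, -⟩ := h2 d hd.1 hdA
  obtain ⟨z, hz⟩ := hne
  exact not_disj hdis hz (hd.2 B hB hdB (h1.1 hz))

/-- smallest member of the family containing `a` -/
lemma IsGreg.exists_min {F : Finset (Finset (Fin (n+1)))} (hF : IsGreg F) (a : Fin (n+1)) :
    ∃ A ∈ F, Own F A a := by
  classical
  obtain ⟨A, hA, hmin⟩ := Finset.exists_min_image (F.filter (a ∈ ·)) Finset.card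
    ⟨Finset.univ, by simp [hF.top]⟩
  simp only [Finset.mem_filter] at hA hmin
  refine ⟨A, hA.1, hA.2, fun B hB ha => ?_⟩
  rcases hF.chain hA.1 hB hA.2 ha with h | h
  · exact h
  · exact (Finset.eq_of_subset_of_card_le h (hmin B ⟨hB, ha⟩)).ge

lemma Own.unique {F : Finset (Finset (Fin (n+1)))} {A B a} (hA : A ∈ F) (hB : B ∈ F)
    (h1 : Own F A a) (h2 : Own F B a) : A = B :=
  (h1.2 B hB h2.1).antisymm (h2.2 A hA h1.1)

lemma IsGreg.own_inj {F : Finset (Finset (Fin (n+1)))} (hF : IsGreg F) {A a b} 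
    (h1 : Own F A a) (h2 : Own F A b) : a = b := by
  by_contra hab
  obtain ⟨B, hB, h⟩ := hF.sep a b hab
  exact h ⟨fun h => h1.2 B hB h h2.1, fun h => h2.2 B hB h h1.1⟩

/-! ### uniqueness -/

lemma not_bad_of_mem {T F : Finset (Finset (Fin (n+1)))} (hT : IsCay T) (hF : IsGreg F)
    (hTF : T ⊆ F) (hbad : ∀ A ∈ F, A ∉ T → Bad T A) {A} (hA : A ∈ T) : ¬ Bad F A := by
  classical
  rintro ⟨P, hP, hAP, hx⟩
  obtain ⟨a, ha⟩ := hT.own A hA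
  -- the cover of `A` in `T`
  have hAu : A ≠ Finset.univ := by
    rintro rfl
    exact hAP.2 (Finset.subset_univ _)
  obtain ⟨D, hD, hDmin⟩ := Finset.exists_min_image (T.filter (A ⊂ ·)) Finset.card
    ⟨Finset.univ, by simp [hT.top, Finset.ssubset_univ_iff, hAu]⟩
  simp only [Finset.mem_filter] at hD hDmin
  obtain ⟨hDT, hAD⟩ := hD
  have hcov : ∀ B ∈ T, A ⊂ B → D ⊆ B := by
    intro B hB hAB
    rcases hT.chain hDT hB (hAD.1 ha.1) (hAB.1 ha.1) with h | h
    · exact h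
    · exact (Finset.eq_of_subset_of_card_le h (hDmin B ⟨hB, hAB⟩)).ge
  obtain ⟨d, hd⟩ := hT.own D hDT
  have hdA : d ∉ A := fun h => hAD.2 (hd.2 A hA h)
  by_cases hdP : d ∈ P
  · obtain ⟨B, hB, hdB, hdis, hlt⟩ := hx d hdP hdA
    have hBT : B ∉ T := fun h => not_disj hdis ha.1 (hd.2 B h hdB (hAD.1 ha.1))
    obtain ⟨E, hE⟩ := hbad B hB hBT
    obtain ⟨e, he⟩ := hT.own E hE.1
    have heB : e ∈ B := hE.own_mem ⟨d, hdB⟩ he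
    have hDE : D ⊆ E := hd.2 E hE.1 (hE.2.1.1 hdB)
    have hED : E ⊆ D := by
      apply he.2 D hDT
      rcases hF.chain hB (hTF hDT) hdB hd.1 with h | h
      · exact h heB
      · exact (not_disj hdis ha.1 (h (hAD.1 ha.1))).elim
    have : D = E := hDE.antisymm hED
    subst this
    obtain ⟨B', hB', haB', hdis', hlt'⟩ := hE.2.2 a (hAD.1 ha.1) (fun h => not_disj hdis ha.1 h)
    have hB'A : B' ⊆ A := by
      rcases hT.chain hB' hA haB' ha.1 with h | h
      · exact h
      · by_contra hc
        exact not_disj hdis' hdB (hcov B' hB' ⟨h, hc⟩ hd.1)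
    exact ((hlt'.trans hlt).mono hB'A subset_rfl).irrefl
  · have hPT : P ∉ T := fun h => hdP (hcov P h hAP hd.1)
    obtain ⟨E, hE⟩ := hbad P hP hPT
    obtain ⟨e, he⟩ := hT.own E hE.1
    have heP : e ∈ P := hE.own_mem ⟨a, hAP.1 ha.1⟩ he
    have hDE : D ⊆ E := hcov E hE.1 (hAP.trans hE.2.1)
    have hPD : P ⊆ D := by
      rcases hF.chain hP (hTF hDT) (hAP.1 ha.1) (hAD.1 ha.1) with h | h
      · exact h
      · exact (hdP (h hd.1)).elim
    have hED : E ⊆ D := he.2 D hDT (hPD heP)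
    have : D = E := hDE.antisymm hED
    subst this
    exact hdP (by have := hT.toIsGreg.own_inj he hd; rwa [← this])

/-! ### existence -/

open Classical in
def contr (F : Finset (Finset (Fin (n+1)))) : Finset (Finset (Fin (n+1))) := F.filter (fun A => ¬ Bad F A)

lemma mem_contr {F : Finset (Finset (Fin (n+1)))} {A} : A ∈ contr F ↔ A ∈ F ∧ ¬ Bad F A := by
  classical
  simp [contr]

lemma contr_top {F : Finset (Finset (Fin (n+1)))} (hF : IsGreg F) : Finset.univ ∈ contr F := by
  rw [mem_contr]
  refine ⟨hF.top, ?_⟩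
  rintro ⟨P, -, h, -⟩
  exact h.2 (Finset.subset_univ _)

/-- All members of `F` strictly below a member `P` of the contraction with nothing of the
contraction in between are bad via `P`. -/
lemma badVia_of_between {F : Finset (Finset (Fin (n+1)))} (hF : IsGreg F) {P} (hP : P ∈ F) :
    ∀ k : ℕ, ∀ A ∈ F, Aᶜ.card ≤ k → A ⊂ P → (∀ B ∈ F, A ⊆ B → B ⊂ P → Bad F B) → BadVia F A P := by
  intro k
  induction k with
  | zero =>
    intro A hA hk hAP
    exfalso
    have : A = Finset.univ := by simpa using hk
    subst this
    exact hAP.2 (Finset.subset_univ _)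
  | succ k ih =>
    intro A hA hk hAP hB
    obtain ⟨Q, hQ, hAQ, hx⟩ := hB A hA subset_rfl hAP
    obtain ⟨a, ha⟩ := hF.ne A hA
    refine ⟨hP, hAP, fun x hxP hxA => ?_⟩
    by_cases hxQ : x ∈ Q
    · exact hx x hxQ hxA
    · have hQP : Q ⊂ P := by
        rcases hF.chain hQ hP (hAQ.1 ha) (hAP.1 ha) with h | h
        · exact ⟨h, fun h' => hxQ (h' hxP)⟩
        · exact (hxQ (h hxP)).elim
      have := ih Q hQ (by
        have : Qᶜ.card < Aᶜ.card := Finset.card_lt_card (by simpa using hAQ)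
        omega) hQP (fun B hB' h1 h2 => hB B hB' (hAQ.1.trans h1) h2)
      obtain ⟨B, hB, hxB, hd, hl⟩ := this.2.2 x hxP hxQ
      exact ⟨B, hB, hxB, Finset.disjoint_of_subset_left hAQ.1 hd, hl.mono subset_rfl hAQ.1⟩

lemma contr_bad {F : Finset (Finset (Fin (n+1)))} (hF : IsGreg F) {A} (hA : A ∈ F) (hAT : A ∉ contr F) :
    Bad (contr F) A := by
  classical
  obtain ⟨a, ha⟩ := hF.ne A hA
  have hAu : A ≠ Finset.univ := by
    rintro rfl
    exact hAT (contr_top hF)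
  obtain ⟨P, hP, hPmin⟩ := Finset.exists_min_image ((contr F).filter (A ⊂ ·)) Finset.card
    ⟨Finset.univ, by simp [contr_top hF, Finset.ssubset_univ_iff, hAu]⟩
  simp only [Finset.mem_filter] at hP hPmin
  obtain ⟨hPT, hAP⟩ := hP
  have hPF := (mem_contr.1 hPT).1
  have hbtw : ∀ B ∈ F, A ⊆ B → B ⊂ P → Bad F B := by
    intro B hB h1 h2
    by_contra hc
    have hBT : B ∈ contr F := mem_contr.2 ⟨hB, hc⟩
    have h3 : A ⊂ B := h1.ssubset_of_ne (by rintro rfl; exact hAT hBT)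
    exact absurd (hPmin B ⟨hBT, h3⟩) (not_le.2 (Finset.card_lt_card h2))
  have hvia : ∀ B ∈ F, A ⊆ B → B ⊂ P → BadVia F B P := fun B hB h1 h2 =>
    badVia_of_between hF hPF _ B hB le_rfl h2 (fun B' hB' h3 h4 => hbtw B' hB' (h1.trans h3) h4)
  have hAv := hvia A hA subset_rfl hAP
  refine ⟨P, hPT, hAP, fun x hxP hxA => ?_⟩
  obtain ⟨B0, hB0, hB0x, hB0d, hB0l⟩ := hAv.2.2 x hxP hxA
  obtain ⟨B, hB, hBmax⟩ := Finset.exists_max_image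
    (F.filter (fun B => x ∈ B ∧ Disjoint A B ∧ MLt B A)) Finset.card
    ⟨B0, by simp [*]⟩
  simp only [Finset.mem_filter] at hB hBmax
  obtain ⟨hBF, hxB, hdis, hlt⟩ := hB
  have hmax : ∀ Q ∈ F, B ⊂ Q → Disjoint A Q → False := by
    intro Q hQ h1 h2
    exact absurd (hBmax Q ⟨hQ, h1.1 hxB, h2, hlt.mono h1.1 subset_rfl⟩)
      (not_le.2 (Finset.card_lt_card h1))
  refine ⟨B, mem_contr.2 ⟨hBF, ?_⟩, hxB, hdis, hlt⟩
  rintro ⟨Q, hQ, hBQ, hQx⟩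
  have hAQ : A ⊆ Q := by
    rcases hF.lam A hA Q hQ with h | h | h
    · exact h
    · exact (not_disj hdis (h (hBQ.1 hxB)) hxB).elim
    · exact (hmax Q hQ hBQ h).elim
  obtain ⟨B', hB', haB', hdis', hlt'⟩ := hQx a (hAQ ha) (fun h => not_disj hdis ha h)
  have hAB' : A ⊆ B' := by
    rcases hF.chain hA hB' ha haB' with h | h
    · exact h
    · exact ((hlt'.trans hlt).mono h subset_rfl).irrefl.elim
  have hxB' : x ∉ B' := fun h => not_disj hdis' hxB h
  have hB'P : B' ⊂ P := by
    rcases hF.chain hB' hPF haB' (hAP.1 ha) with h | h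
    · exact ⟨h, fun h' => hxB' (h' hxP)⟩
    · exact (hxB' (h hxP)).elim
  obtain ⟨B2, hB2, hxB2, hd2, hl2⟩ := (hvia B' hB' hAB' hB'P).2.2 x hxP hxB'
  rcases hF.chain hBF hB2 hxB hxB2 with h | h
  · by_cases h' : B2 ⊆ B
    · exact ((hl2.trans hlt').mono h' subset_rfl).irrefl
    · exact hmax B2 hB2 ⟨h, h'⟩ (Finset.disjoint_of_subset_left hAB' hd2)
  · exact ((hl2.trans hlt').mono h subset_rfl).irrefl

lemma exists_rep {F : Finset (Finset (Fin (n+1)))} (hF : IsGreg F) :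
    ∀ k : ℕ, ∀ A ∈ F, A.card ≤ k → ∃ a ∈ A, ∀ B ∈ F, a ∈ B → B ⊂ A → Bad F B := by
  classical
  intro k
  induction k with
  | zero =>
    intro A hA hk
    have := hF.ne A hA
    simp at hk
    simp [hk] at this
  | succ k ih =>
    intro A hA hk
    by_cases ho : ∃ a, Own F A a
    · obtain ⟨a, ha⟩ := ho
      exact ⟨a, ha.1, fun B hB h1 h2 => (h2.2 (ha.2 B hB h1)).elim⟩
    · -- maximal proper subclades
      let K := F.filter (fun B => B ⊂ A ∧ ∀ B' ∈ F, B ⊆ B' → B' ⊂ A → B' = B)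
      have hK : ∀ x ∈ A, ∃ B ∈ K, x ∈ B := by
        intro x hx
        have : ∃ B ∈ F, x ∈ B ∧ B ⊂ A := by
          by_contra hc
          push Not at hc
          refine ho ⟨x, hx, fun B hB hxB => ?_⟩
          rcases hF.chain hA hB hx hxB with h | h
          · exact h
          · by_contra h'
            exact hc B hB hxB ⟨h, h'⟩
        obtain ⟨B0, hB0, hxB0, hB0A⟩ := this
        obtain ⟨B, hB, hmax⟩ := Finset.exists_max_image
          (F.filter (fun B => x ∈ B ∧ B ⊂ A)) Finset.card ⟨B0, by simp [*]⟩
        simp only [Finset.mem_filter] at hB hmax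
        refine ⟨B, ?_, hB.2.1⟩
        simp only [K, Finset.mem_filter]
        refine ⟨hB.1, hB.2.2, fun B' hB' h1 h2 => ?_⟩
        exact (Finset.eq_of_subset_of_card_le h1 (hmax B' ⟨hB', h1 hB.2.1, h2⟩)).symm
      obtain ⟨x0, hx0⟩ := hF.ne A hA
      obtain ⟨B0, hB0, -⟩ := hK x0 hx0
      -- the one with the largest minimum
      obtain ⟨D, hD, hDmax⟩ := Finset.exists_max_image K
        (fun B => if h : B.Nonempty then (B.min' h) else 0) ⟨B0, hB0⟩
      have hDK := hD
      simp only [K, Finset.mem_filter] at hD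
      obtain ⟨hDF, hDA, hDm⟩ := hD
      have hbad : Bad F D := by
        refine ⟨A, hA, hDA, fun x hxA hxD => ?_⟩
        obtain ⟨B, hBK, hxB⟩ := hK x hxA
        have hle := hDmax B hBK
        simp only [K, Finset.mem_filter] at hBK
        obtain ⟨hBF, hBA, hBm⟩ := hBK
        have hdis : Disjoint D B := by
          rcases hF.lam D hDF B hBF with h | h | h
          · exact (hxD (hDm B hBF h hBA ▸ hxB)).elim
          · exact (hxD (h hxB)).elim
          · exact h
        refine ⟨B, hBF, hxB, hdis, B.min' ⟨x, hxB⟩, Finset.min'_mem _ _, fun z hz => ?_⟩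
        rw [dif_pos ⟨x, hxB⟩, dif_pos ⟨z, hz⟩] at hle
        refine lt_of_le_of_ne (hle.trans (Finset.min'_le _ _ hz)) ?_
        rintro rfl
        exact not_disj hdis hz (Finset.min'_mem _ _)
      obtain ⟨a, haD, ha⟩ := ih D hDF (by
        have := Finset.card_lt_card hDA
        omega)
      refine ⟨a, hDA.1 haD, fun B hB haB hBA => ?_⟩
      rcases hF.chain hB hDF haB haD with h | h
      · by_cases h' : D ⊆ B
        · exact (h.antisymm h') ▸ hbad
        · exact ha B hB haB ⟨h, h'⟩
      · exact (hDm B hB h hBA) ▸ hbad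

lemma contr_cay {F : Finset (Finset (Fin (n+1)))} (hF : IsGreg F) : IsCay (contr F) where
  ne A hA := hF.ne A (mem_contr.1 hA).1
  top := contr_top hF
  lam A hA B hB := hF.lam A (mem_contr.1 hA).1 B (mem_contr.1 hB).1
  zero A hA := hF.zero A (mem_contr.1 hA).1
  sep a b hab := by
    by_contra hc
    push Not at hc
    obtain ⟨A, hA, hAab⟩ := hF.sep a b hab
    by_cases hAT : A ∈ contr F
    · exact hAab (hc A hAT)
    · obtain ⟨P, hP, hAP, hx⟩ := contr_bad hF hA hAT
      by_cases haA : a ∈ A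
      · have hbA : b ∉ A := fun h => hAab (by simp [haA, h])
        obtain ⟨B, hB, hbB, hd, -⟩ := hx b ((hc P hP).1 (hAP.1 haA)) hbA
        exact not_disj hd haA ((hc B hB).2 hbB)
      · have hbA : b ∈ A := by by_contra h; exact hAab (by simp [haA, h])
        obtain ⟨B, hB, hbB, hd, -⟩ := hx a ((hc P hP).2 (hAP.1 hbA)) haA
        exact not_disj hd hbA ((hc B hB).1 hbB)
  own A hA := by
    obtain ⟨hAF, hAb⟩ := mem_contr.1 hA
    obtain ⟨a, haA, ha⟩ := exists_rep hF _ A hAF le_rfl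
    refine ⟨a, haA, fun B hB haB => ?_⟩
    obtain ⟨hBF, hBb⟩ := mem_contr.1 hB
    rcases hF.chain hAF hBF haA haB with h | h
    · exact h
    · by_contra h'
      exact hBb (ha B hBF haB ⟨h, h'⟩)

/-! ### cuts -/

open Classical in
def cuts (T : Finset (Finset (Fin (n+1)))) : Finset (Finset (Fin (n+1))) :=
  Finset.univ.filter (fun A => A ∉ T ∧ A.Nonempty ∧
    (∀ B ∈ T, A ⊆ B ∨ B ⊆ A ∨ Disjoint A B) ∧ Bad T A)

lemma mem_cuts {T : Finset (Finset (Fin (n+1)))} {A} : A ∈ cuts T ↔ A ∉ T ∧ A.Nonempty ∧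
    (∀ B ∈ T, A ⊆ B ∨ B ⊆ A ∨ Disjoint A B) ∧ Bad T A := by
  classical
  simp [cuts]

lemma diff_subset_cuts {T F : Finset (Finset (Fin (n+1)))} (hF : IsGreg F)
    (hTF : T ⊆ F) (hbad : ∀ A ∈ F, A ∉ T → Bad T A) : F \ T ⊆ cuts T := by
  intro A hA
  rw [Finset.mem_sdiff] at hA
  exact mem_cuts.2 ⟨hA.2, hF.ne A hA.1, fun B hB => hF.lam A hA.1 B (hTF hB), hbad A hA.1 hA.2⟩

lemma cuts_same {T : Finset (Finset (Fin (n+1)))} {A A' P d} (hA : A ∈ cuts T)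
    (hAv : BadVia T A P) (hA'v : BadVia T A' P) (hd : d ∈ A) (hd' : d ∈ A') {x} (hx : x ∈ A)
    (hx' : x ∉ A') : ∃ B ∈ T, x ∈ B ∧ B ⊆ A ∧ MLt B A' := by
  obtain ⟨B, hB, hxB, hdis, hlt⟩ := hA'v.2.2 x (hAv.2.1.1 hx) hx'
  refine ⟨B, hB, hxB, ?_, hlt⟩
  rcases (mem_cuts.1 hA).2.2.1 B hB with h | h | h
  · exact (not_disj hdis hd' (h hd)).elim
  · exact h
  · exact (not_disj h hx hxB).elim

lemma cuts_compat {T : Finset (Finset (Fin (n+1)))} (hT : IsCay T) {A A'} (hA : A ∈ cuts T)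
    (hA' : A' ∈ cuts T) : A ⊆ A' ∨ A' ⊆ A ∨ Disjoint A A' := by
  obtain ⟨hAT, hAne, hAc, P, hP⟩ := mem_cuts.1 hA
  obtain ⟨hAT', hAne', hAc', P', hP'⟩ := mem_cuts.1 hA'
  obtain ⟨d, hd⟩ := hT.own P hP.1
  obtain ⟨d', hd'⟩ := hT.own P' hP'.1
  have hdA := hP.own_mem hAne hd
  have hdA' := hP'.own_mem hAne' hd'
  by_cases hPP : P = P'
  · subst hPP
    have := hT.toIsGreg.own_inj hd hd'
    subst this
    by_contra hc
    push Not at hc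
    obtain ⟨x, hx, hx'⟩ := Finset.not_subset.1 hc.1
    obtain ⟨y, hy, hy'⟩ := Finset.not_subset.1 hc.2.1
    obtain ⟨B, -, -, hB, hl⟩ := cuts_same hA hP hP' hdA hdA' hx hx'
    obtain ⟨B', -, -, hB', hl'⟩ := cuts_same hA' hP' hP hdA' hdA hy hy'
    exact ((hl.mono hB subset_rfl).trans (hl'.mono hB' subset_rfl)).irrefl
  · rcases hT.lam P hP.1 P' hP'.1 with h | h | h
    · rcases hAc' P hP.1 with h1 | h1 | h1
      · exact (hPP (h.antisymm (hd'.2 P hP.1 (h1 hdA')))).elim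
      · exact Or.inl (hP.2.1.1.trans h1)
      · exact Or.inr (Or.inr (Finset.disjoint_of_subset_left hP.2.1.1 h1.symm))
    · rcases hAc P' hP'.1 with h1 | h1 | h1
      · exact (hPP ((hd.2 P' hP'.1 (h1 hdA)).antisymm h)).elim
      · exact Or.inr (Or.inl (hP'.2.1.1.trans h1))
      · exact Or.inr (Or.inr (Finset.disjoint_of_subset_right hP'.2.1.1 h1))
    · exact Or.inr (Or.inr (Finset.disjoint_of_subset_left hP.2.1.1
        (Finset.disjoint_of_subset_right hP'.2.1.1 h)))

lemma greg_union {T S : Finset (Finset (Fin (n+1)))} (hT : IsCay T) (hS : S ⊆ cuts T) :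
    IsGreg (T ∪ S) where
  ne A hA := by
    rcases Finset.mem_union.1 hA with h | h
    · exact hT.ne A h
    · exact (mem_cuts.1 (hS h)).2.1
  top := Finset.mem_union_left _ hT.top
  lam A hA B hB := by
    rcases Finset.mem_union.1 hA with h | h <;> rcases Finset.mem_union.1 hB with h' | h'
    · exact hT.lam A h B h'
    · rcases (mem_cuts.1 (hS h')).2.2.1 A h with h | h | h
      · exact Or.inr (Or.inl h)
      · exact Or.inl h
      · exact Or.inr (Or.inr h.symm)
    · exact (mem_cuts.1 (hS h)).2.2.1 B h'
    · exact cuts_compat hT (hS h) (hS h')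
  zero A hA h0 := by
    rcases Finset.mem_union.1 hA with h | h
    · exact hT.zero A h h0
    · exfalso
      obtain ⟨P, hP, hAP, hx⟩ := (mem_cuts.1 (hS h)).2.2.2
      obtain ⟨x, hxP, hxA⟩ := Finset.exists_of_ssubset hAP
      obtain ⟨B, -, -, -, y, -, hy⟩ := hx x hxP hxA
      exact absurd (hy 0 h0) (by simp)
  sep a b hab := by
    obtain ⟨A, hA, h⟩ := hT.sep a b hab
    exact ⟨A, Finset.mem_union_left _ hA, h⟩

lemma contr_union {T S : Finset (Finset (Fin (n+1)))} (hT : IsCay T) (hS : S ⊆ cuts T) :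
    contr (T ∪ S) = T := by
  ext A
  rw [mem_contr]
  have hb : ∀ A ∈ T ∪ S, A ∉ T → Bad T A := by
    intro A hA hAT
    rcases Finset.mem_union.1 hA with h | h
    · exact (hAT h).elim
    · exact (mem_cuts.1 (hS h)).2.2.2
  constructor
  · rintro ⟨hA, hnb⟩
    by_contra hAT
    exact hnb ((hb A hA hAT).mono Finset.subset_union_left)
  · intro hA
    exact ⟨Finset.mem_union_left _ hA,
      not_bad_of_mem hT (greg_union hT hS) Finset.subset_union_left hb hA⟩

end families

section weights
variable {n : ℕ}

open Classical in
/-- the improper parents of a family -/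
def imprF (F : Finset (Finset (Fin (n+1)))) : Finset (Fin (n+1)) :=
  Finset.univ.filter (fun a => ¬ ∃ A ∈ F, a ∈ A ∧ ∀ z ∈ A, a ≤ z)

lemma mem_imprF {F : Finset (Finset (Fin (n+1)))} {a} :
    a ∈ imprF F ↔ ¬ ∃ A ∈ F, a ∈ A ∧ ∀ z ∈ A, a ≤ z := by
  classical
  simp [imprF]

def mn (A : Finset (Fin (n+1))) : Fin (n+1) := if h : A.Nonempty then A.min' h else 0

lemma mn_mem {A : Finset (Fin (n+1))} (h : A.Nonempty) : mn A ∈ A := by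
  rw [mn, dif_pos h]; exact Finset.min'_mem _ _

lemma mn_le {A : Finset (Fin (n+1))} {z} (h : z ∈ A) : mn A ≤ z := by
  rw [mn, dif_pos ⟨z, h⟩]; exact Finset.min'_le _ _ h

lemma mn_eq {A : Finset (Fin (n+1))} {a} (h : a ∈ A) (h' : ∀ z ∈ A, a ≤ z) : mn A = a :=
  le_antisymm (mn_le h) (h' _ (mn_mem ⟨a, h⟩))

lemma MLt.mn_lt {A B : Finset (Fin (n+1))} (h : MLt B A) {z} (hz : z ∈ A) : mn B < z := by
  obtain ⟨y, hy, h⟩ := h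
  exact lt_of_le_of_lt (mn_le hy) (h z hz)

open Classical in
def mkCut (T : Finset (Finset (Fin (n+1)))) (P : Finset (Fin (n+1))) (k : ℕ) : Finset (Fin (n+1)) :=
  P.filter (fun x => ∀ B ∈ T, B ⊂ P → x ∈ B → ∀ y ∈ B, k ≤ y.val)

lemma mem_mkCut {T : Finset (Finset (Fin (n+1)))} {P k x} : x ∈ mkCut T P k ↔
    x ∈ P ∧ ∀ B ∈ T, B ⊂ P → x ∈ B → ∀ y ∈ B, k ≤ y.val := by
  classical
  simp [mkCut]

lemma own_mem_mkCut {T : Finset (Finset (Fin (n+1)))} {P k d} 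
    (hd : Own T P d) : d ∈ mkCut T P k :=
  mem_mkCut.2 ⟨hd.1, fun B hB h1 h2 => (h1.2 (hd.2 B hB h2)).elim⟩

lemma mkCut_ge {T : Finset (Finset (Fin (n+1)))} (hT : IsCay T) {P k d} (hP : P ∈ T)
    (hd : Own T P d) (hk : k ≤ d.val) {x} (hx : x ∈ mkCut T P k) : k ≤ x.val := by
  obtain ⟨hxP, hx⟩ := mem_mkCut.1 hx
  obtain ⟨B, hB, hBx⟩ := hT.toIsGreg.exists_min x
  by_cases h : P ⊆ B
  · have : B = P := (hBx.2 P hP hxP).antisymm h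
    subst this
    rwa [hT.toIsGreg.own_inj hBx hd]
  · exact hx B hB ⟨hBx.2 P hP hxP, h⟩ hBx.1 x hBx.1

lemma mkCut_mem {T : Finset (Finset (Fin (n+1)))} (hT : IsCay T) {P k d} (hP : P ∈ T)
    (hd : Own T P d) (hk : k ≤ d.val) (hb : ∃ b ∈ P, b.val < k) : mkCut T P k ∈ cuts T := by
  have hdA : d ∈ mkCut T P k := own_mem_mkCut hd
  have hge := fun x => @mkCut_ge n T hT P k d hP hd hk x
  have hsub : mkCut T P k ⊆ P := fun x hx => (mem_mkCut.1 hx).1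
  obtain ⟨b, hbP, hbk⟩ := hb
  have hbA : b ∉ mkCut T P k := fun h => absurd (hge b h) (by omega)
  refine mem_cuts.2 ⟨fun h => hbA (hd.2 _ h hdA hbP), ⟨d, hdA⟩, fun B hB => ?_, P, hP,
    ⟨hsub, fun h => hbA (h hbP)⟩, fun x hxP hxA => ?_⟩
  · rcases hT.lam P hP B hB with h | h | h
    · exact Or.inl (hsub.trans h)
    · by_cases h' : P ⊆ B
      · exact Or.inl (hsub.trans h')
      · by_cases hdis : Disjoint (mkCut T P k) B
        · exact Or.inr (Or.inr hdis)
        · right; left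
          obtain ⟨x, hxA, hxB⟩ := Finset.not_disjoint_iff.1 hdis
          intro w hw
          refine mem_mkCut.2 ⟨h hw, fun B' hB' h1 h2 y hy => ?_⟩
          rcases hT.chain hB hB' hw h2 with h3 | h3
          · exact (mem_mkCut.1 hxA).2 B' hB' h1 (h3 hxB) y hy
          · exact (mem_mkCut.1 hxA).2 B hB ⟨h, h'⟩ hxB y (h3 hy)
    · exact Or.inr (Or.inr (Finset.disjoint_of_subset_left hsub h))
  · rw [mem_mkCut] at hxA
    push Not at hxA
    obtain ⟨B, hB, hBP, hxB, y, hy, hyk⟩ := hxA hxP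
    refine ⟨B, hB, hxB, Finset.disjoint_left.2 fun w hw hwB => ?_, y, hy, fun z hz => ?_⟩
    · exact absurd ((mem_mkCut.1 hw).2 B hB hBP hwB y hy) (by omega)
    · have := hge z hz
      exact Fin.lt_def.2 (by omega)

lemma low_exists {T : Finset (Finset (Fin (n+1)))} (hT : IsCay T) {a} (ha : a ∈ imprF T) :
    ∃ A ∈ cuts T, a ∈ A ∧ ∀ z ∈ A, a ≤ z := by
  rw [mem_imprF] at ha
  push Not at ha
  obtain ⟨P, hP, hPa⟩ := hT.toIsGreg.exists_min a
  obtain ⟨b, hb, hba⟩ := ha P hP hPa.1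
  exact ⟨mkCut T P a.val, mkCut_mem hT hP hPa le_rfl ⟨b, hb, hba⟩, own_mem_mkCut hPa,
    fun z hz => mkCut_ge hT hP hPa le_rfl hz⟩

lemma low_own {T : Finset (Finset (Fin (n+1)))} (hT : IsCay T) {a} (ha : a ∈ imprF T) {A P}
    (hA : A ∈ cuts T) (h1 : a ∈ A) (h2 : ∀ z ∈ A, a ≤ z) (hv : BadVia T A P) : Own T P a := by
  obtain ⟨d, hd⟩ := hT.own P hv.1
  have hdA := hv.own_mem ⟨a, h1⟩ hd
  obtain ⟨B, hB, hBa⟩ := hT.toIsGreg.exists_min a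
  rcases (mem_cuts.1 hA).2.2.1 B hB with h | h | h
  · have : B = P := (hBa.2 P hv.1 (hv.2.1.1 h1)).antisymm (hd.2 B hB (h hdA))
    exact this ▸ hBa
  · exact (mem_imprF.1 ha ⟨B, hB, hBa.1, fun z hz => h2 z (h hz)⟩).elim
  · exact (not_disj h h1 hBa.1).elim

lemma low_le {T : Finset (Finset (Fin (n+1)))} (hT : IsCay T) {a} (ha : a ∈ imprF T) {A A'}
    (hA : A ∈ cuts T) (h1 : a ∈ A) (h2 : ∀ z ∈ A, a ≤ z) 
    (hA' : A' ∈ cuts T) (h1' : a ∈ A') (h2' : ∀ z ∈ A', a ≤ z) : A ⊆ A' := by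
  obtain ⟨P, hP⟩ := (mem_cuts.1 hA).2.2.2
  obtain ⟨P', hP'⟩ := (mem_cuts.1 hA').2.2.2
  have : P = P' := Own.unique hP.1 hP'.1 (low_own hT ha hA h1 h2 hP) (low_own hT ha hA' h1' h2' hP')
  subst this
  intro x hx
  by_contra hx'
  obtain ⟨B, hB, hxB, hBA, y, hy, hlt⟩ := cuts_same hA hP hP' h1 h1' hx hx'
  exact absurd (hlt a h1') (not_lt.2 (h2 y (hBA hy)))

open Classical in
def lows (T : Finset (Finset (Fin (n+1)))) : Finset (Finset (Fin (n+1))) :=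
  (cuts T).filter (fun A => mn A ∈ imprF T)

lemma card_imprF_union {T S : Finset (Finset (Fin (n+1)))} (hT : IsCay T) (hS : S ⊆ cuts T) :
    (imprF (T ∪ S)).card = (lows T \ S).card := by
  classical
  symm
  have key : ∀ A ∈ cuts T, ∀ A' ∈ cuts T, mn A ∈ imprF T → mn A = mn A' → A = A' := by
    intro A hA A' hA' h heq
    have e := mn_mem (mem_cuts.1 hA').2.1
    rw [← heq] at e
    have e2 : ∀ z ∈ A', mn A ≤ z := fun z hz => heq ▸ mn_le hz
    have e3 := mn_mem (mem_cuts.1 hA).2.1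
    have e4 : ∀ z ∈ A, mn A ≤ z := fun z hz => mn_le hz
    exact (low_le hT h hA e3 e4 hA' e e2).antisymm (low_le hT h hA' e e2 hA e3 e4)
  refine Finset.card_bij (fun A _ => mn A) ?_ ?_ ?_
  · intro A hA
    simp only [lows, Finset.mem_sdiff, Finset.mem_filter] at hA
    obtain ⟨⟨hA, hi⟩, hAS⟩ := hA
    rw [mem_imprF]
    rintro ⟨A', hA', h1, h2⟩
    rcases Finset.mem_union.1 hA' with h | h
    · exact mem_imprF.1 hi ⟨A', h, h1, h2⟩
    · rw [key A hA A' (hS h) hi (mn_eq h1 h2).symm] at hAS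
      exact hAS h
  · intro A hA A' hA'
    simp only [lows, Finset.mem_sdiff, Finset.mem_filter] at hA hA'
    exact key A hA.1.1 A' hA'.1.1 hA.1.2
  · intro a ha
    rw [mem_imprF] at ha
    have hi : a ∈ imprF T := mem_imprF.2 fun ⟨A, hA, h⟩ => ha ⟨A, Finset.mem_union_left _ hA, h⟩
    obtain ⟨A, hA, h1, h2⟩ := low_exists hT hi
    refine ⟨A, ?_, mn_eq h1 h2⟩
    simp only [lows, Finset.mem_sdiff, Finset.mem_filter]
    refine ⟨⟨hA, by rwa [mn_eq h1 h2]⟩, fun h => ha ⟨A, Finset.mem_union_right _ h, h1, h2⟩⟩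

lemma sum_interval {R : Type*} [CommRing R] (y t : R) {T : Finset (Finset (Fin (n+1)))} (hT : IsCay T) :
    ∑ S ∈ (cuts T).powerset, y ^ S.card * t ^ (imprF (T ∪ S)).card
      = (y + 1) ^ ((cuts T).card - (imprF T).card) * (y + t) ^ (imprF T).card := by
  classical
  have hl : (imprF T).card = (lows T).card := by
    have := card_imprF_union (S := ∅) hT (by simp)
    simpa using this
  have hsub : lows T ⊆ cuts T := by
    unfold lows; exact Finset.filter_subset _ _
  have h1 : ∏ A ∈ cuts T, (y + if A ∈ lows T then t else 1)
      = (y + 1) ^ ((cuts T).card - (imprF T).card) * (y + t) ^ (imprF T).card := by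
    rw [← Finset.prod_sdiff hsub, hl, ← Finset.card_sdiff_of_subset hsub]
    congr 1
    · rw [Finset.prod_congr rfl (g := fun _ => y + 1)]
      · simp
      · intro A hA
        rw [if_neg (Finset.mem_sdiff.1 hA).2]
    · rw [Finset.prod_congr rfl (g := fun _ => y + t)]
      · simp
      · intro A hA
        rw [if_pos hA]
  rw [← h1, Finset.prod_add]
  refine Finset.sum_congr rfl fun S hS => ?_
  have hS := Finset.mem_powerset.1 hS
  rw [card_imprF_union hT hS, Finset.prod_const]
  congr 1
  rw [Finset.prod_ite]
  simp only [Finset.prod_const, one_pow, mul_one]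
  congr 2
  ext A
  simp only [Finset.mem_sdiff, Finset.mem_filter]
  constructor
  · rintro ⟨h, h'⟩
    exact ⟨⟨hsub h, h'⟩, h⟩
  · rintro ⟨⟨_, h'⟩, h⟩
    exact ⟨h, h'⟩

/-- The number of cuts is the number of improper edges. -/
lemma card_cuts {T : Finset (Finset (Fin (n+1)))} (hT : IsCay T) (D : Fin (n+1) → Finset (Fin (n+1)))
    (p : Fin (n+1) → Fin (n+1)) (hD : ∀ c, D c ∈ T) (hO : ∀ c, Own T (D c) c)
    (hp : ∀ c, c ≠ 0 → D c ⊂ D (p c) ∧ ∀ B ∈ T, D c ⊂ B → D (p c) ⊆ B) :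
    (cuts T).card = {c : Fin (n+1) | c ≠ 0 ∧ mn (D c) < p c}.ncard := by
  classical
  have hall : ∀ A ∈ T, ∃ a, A = D a := fun A hA => by
    obtain ⟨a, ha⟩ := hT.own A hA
    exact ⟨a, Own.unique hA (hD a) ha (hO a)⟩
  have hinj : ∀ a b, D a = D b → a = b := fun a b h =>
    hT.toIsGreg.own_inj (hO a) (h ▸ hO b)
  have hne : ∀ c, (D c).Nonempty := fun c => ⟨c, (hO c).1⟩
  rw [Set.ncard_eq_toFinset_card']
  symm
  have hlt : ∀ c d, c ≠ 0 → p c = d → ∀ B ∈ T, c ∈ B → B ⊂ D d → B = D c := by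
    rintro c d h0 rfl B hB hcB hBd
    by_contra hc
    exact hBd.2 ((hp c h0).2 B hB (((hO c).2 B hB hcB).ssubset_of_ne (Ne.symm hc)))
  refine Finset.card_bij (fun c _ => mkCut T (D (p c)) ((mn (D c)).val + 1)) ?_ ?_ ?_
  · intro c hc
    simp only [Set.mem_toFinset, Set.mem_ofPred_eq] at hc
    refine mkCut_mem hT (hD _) (hO _) (Nat.succ_le_of_lt hc.2)
      ⟨mn (D c), (hp c hc.1).1.1 (mn_mem (hne c)), Nat.lt_succ_self _⟩
  · have main : ∀ c c', c ≠ 0 → c' ≠ 0 →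
        mkCut T (D (p c)) ((mn (D c)).val + 1) = mkCut T (D (p c')) ((mn (D c')).val + 1) →
        mn (D c) ≤ mn (D c') → c = c' := by
      intro c c' h0 h0' heq hle
      have hpp : p c = p c' := by
        apply hinj
        apply Finset.Subset.antisymm
        · apply (hO _).2 _ (hD _)
          have := own_mem_mkCut (k := (mn (D c)).val + 1) (hO (p c))
          rw [heq] at this
          exact (mem_mkCut.1 this).1
        · apply (hO _).2 _ (hD _)
          have := own_mem_mkCut (k := (mn (D c')).val + 1) (hO (p c'))
          rw [← heq] at this
          exact (mem_mkCut.1 this).1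
      by_contra hcc
      have hlt' : mn (D c) < mn (D c') := by
        refine lt_of_le_of_ne hle fun hm => hcc ?_
        have h1 := mn_mem (hne c')
        rw [← hm] at h1
        apply hinj
        rcases hT.chain (hD c) (hD c') (mn_mem (hne c)) h1 with h | h
        · by_contra h'
          have := (hp c h0).2 _ (hD c') (h.ssubset_of_ne h')
          rw [hpp] at this
          exact (hp c' h0').1.2 this
        · by_contra h'
          have := (hp c' h0').2 _ (hD c) (h.ssubset_of_ne (Ne.symm h'))
          rw [← hpp] at this
          exact (hp c h0).1.2 this
      have hin : c' ∈ mkCut T (D (p c)) ((mn (D c)).val + 1) := by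
        refine mem_mkCut.2 ⟨?_, fun B hB h1 h2 y hy => ?_⟩
        · rw [hpp]; exact (hp c' h0').1.1 (hO c').1
        · rw [hlt c' (p c) h0' hpp.symm B hB h2 h1] at hy
          exact Nat.succ_le_of_lt (lt_of_lt_of_le hlt' (mn_le hy))
      rw [heq] at hin
      exact absurd ((mem_mkCut.1 hin).2 _ (hD c') (hp c' h0').1 (hO c').1 _ (mn_mem (hne c')))
        (by omega)
    intro c hc c' hc' heq
    simp only [Set.mem_toFinset, Set.mem_ofPred_eq] at hc hc'
    rcases le_total (mn (D c)) (mn (D c')) with h | h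
    · exact main c c' hc.1 hc'.1 heq h
    · exact (main c' c hc'.1 hc.1 heq.symm h).symm
  · intro A hA
    obtain ⟨hAT, hAne, hAc, P, hv⟩ := mem_cuts.1 hA
    obtain ⟨d, rfl⟩ := hall P hv.1
    have hdA := hv.own_mem hAne (hO d)
    -- a removed point lies in a removed child
    have hch : ∀ x ∈ D d, x ∉ A → ∃ c, c ≠ 0 ∧ p c = d ∧ Disjoint A (D c) ∧ x ∈ D c := by
      intro x hx hxA
      obtain ⟨B, hB, hxB, hdis, -⟩ := hv.2.2 x hx hxA
      obtain ⟨b, rfl⟩ := hall B hB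
      have hBd : D b ⊂ D d := by
        rcases hT.chain (hD b) (hD d) hxB hx with h | h
        · exact ⟨h, fun h' => not_disj hdis hdA (h' (hO d).1)⟩
        · exact (not_disj hdis hdA (h (hO d).1)).elim
      obtain ⟨c, hc, hmax⟩ := Finset.exists_max_image
        (Finset.univ.filter (fun c => x ∈ D c ∧ D c ⊂ D d)) (fun c => (D c).card)
        ⟨b, by simp [hxB, hBd]⟩
      simp only [Finset.mem_filter, Finset.mem_univ, true_and] at hc hmax
      have hc0 : c ≠ 0 := by
        rintro rfl
        have := hT.zero _ (hD 0) (hO 0).1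
        exact hc.2.2 (this ▸ Finset.subset_univ _)
      have hpc : p c = d := by
        apply hinj
        by_contra hcc
        have h1 := (hp c hc0).2 _ (hD d) hc.2
        have := hmax (p c) ⟨(hp c hc0).1.1 hc.1, h1.ssubset_of_ne hcc⟩
        exact absurd this (not_le.2 (Finset.card_lt_card (hp c hc0).1))
      refine ⟨c, hc0, hpc, ?_, hc.1⟩
      rcases hAc _ (hD c) with h | h | h
      · exact (hc.2.2 ((hO d).2 _ (hD c) (h hdA))).elim
      · exact (hxA (h hc.1)).elim
      · exact h
    obtain ⟨x, hx, hxA⟩ := Finset.exists_of_ssubset hv.2.1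
    obtain ⟨c0, hc0⟩ := hch x hx hxA
    obtain ⟨c, hc, hmax⟩ := Finset.exists_max_image
        (Finset.univ.filter (fun c => c ≠ 0 ∧ p c = d ∧ Disjoint A (D c))) (fun c => mn (D c))
        ⟨c0, by simp only [Finset.mem_filter, Finset.mem_univ, true_and]; tauto⟩
    simp only [Finset.mem_filter, Finset.mem_univ, true_and] at hc hmax
    obtain ⟨h0, hpc, hdis⟩ := hc
    have hcd : D c ⊂ D d := hpc ▸ (hp c h0).1
    have hml : MLt (D c) A := by
      obtain ⟨B, hB, hcB, hBdis, hBl⟩ := hv.2.2 c (hcd.1 (hO c).1)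
        (fun h => not_disj hdis h (hO c).1)
      have hBd : B ⊂ D d := by
        rcases hT.chain hB (hD d) hcB (hcd.1 (hO c).1) with h | h
        · exact ⟨h, fun h' => not_disj hBdis hdA (h' (hO d).1)⟩
        · exact (not_disj hBdis hdA (h (hO d).1)).elim
      rw [hlt c d h0 hpc B hB hcB hBd] at hBl
      exact hBl
    refine ⟨c, ?_, ?_⟩
    · simp only [Set.mem_toFinset, Set.mem_ofPred_eq]
      exact ⟨h0, hpc ▸ hml.mn_lt hdA⟩
    · rw [hpc]
      ext x
      rw [mem_mkCut]
      constructor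
      · rintro ⟨hxd, hxB⟩
        by_contra hxA
        obtain ⟨c', h0', hpc', hdis', hxc'⟩ := hch x hxd hxA
        have h1 := hmax c' ⟨h0', hpc', hdis'⟩
        have h2 := hxB _ (hD c') (hpc' ▸ (hp c' h0').1) hxc' _ (mn_mem (hne c'))
        have h3 : (mn (D c')).val ≤ (mn (D c)).val := h1
        omega
      · intro hxA
        refine ⟨hv.2.1.1 hxA, fun B hB hBd hxB y hy => ?_⟩
        have hBA : B ⊆ A := by
          rcases hAc B hB with h | h | h
          · exact (hBd.2 ((hO d).2 B hB (h hdA))).elim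
          · exact h
          · exact (not_disj h hxA hxB).elim
        exact Nat.succ_le_of_lt (hml.mn_lt (hBA hy))

/-- number of members of a Cayley family -/
lemma IsCay.card {T : Finset (Finset (Fin (n+1)))} (hT : IsCay T) : T.card = n + 1 := by
  classical
  choose M hM hO using hT.toIsGreg.exists_min
  have : Finset.univ.image M = T := by
    ext A
    simp only [Finset.mem_image, Finset.mem_univ, true_and]
    constructor
    · rintro ⟨a, rfl⟩; exact hM a
    · intro hA
      obtain ⟨a, ha⟩ := hT.own A hA
      exact ⟨a, Own.unique (hM a) hA (hO a) ha⟩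
  rw [← this, Finset.card_image_of_injective, Finset.card_univ, Fintype.card_fin]
  intro a b h
  exact hT.toIsGreg.own_inj (hO a) (h ▸ hO b)

open Classical in
lemma sum_families {R : Type*} [CommRing R] (y t : R) :
    ∑ F ∈ Finset.univ.filter (fun F : Finset (Finset (Fin (n+1))) => IsGreg F),
        y ^ (F.card - (n+1)) * t ^ (imprF F).card
      = ∑ T ∈ Finset.univ.filter (fun F : Finset (Finset (Fin (n+1))) => IsCay F),
      (y + 1) ^ ((cuts T).card - (imprF T).card) * (y + t) ^ (imprF T).card := by
  have h1 : ∀ T ∈ Finset.univ.filter (fun F : Finset (Finset (Fin (n+1))) => IsCay F),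
      (y + 1) ^ ((cuts T).card - (imprF T).card) * (y + t) ^ (imprF T).card
      = ∑ S ∈ (cuts T).powerset, y ^ S.card * t ^ (imprF (T ∪ S)).card := by
    intro T hT
    exact (sum_interval y t (Finset.mem_filter.1 hT).2).symm
  rw [Finset.sum_congr rfl h1, Finset.sum_sigma']
  have hdisj : ∀ T S : Finset (Finset (Fin (n+1))), S ⊆ cuts T → Disjoint T S := by
    intro T S h
    exact Finset.disjoint_left.2 fun A hA hA' => (mem_cuts.1 (h hA')).1 hA
  symm
  refine Finset.sum_bij (fun x _ => x.1 ∪ x.2) ?_ ?_ ?_ ?_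
  · rintro ⟨T, S⟩ h
    simp only [Finset.mem_sigma, Finset.mem_filter, Finset.mem_univ, true_and,
      Finset.mem_powerset] at h ⊢
    exact greg_union h.1 h.2
  · rintro ⟨T, S⟩ h ⟨T', S'⟩ h' heq
    simp only [Finset.mem_sigma, Finset.mem_filter, Finset.mem_univ, true_and,
      Finset.mem_powerset] at h h' heq
    have hTT : T = T' := by
      rw [← contr_union h.1 h.2, ← contr_union h'.1 h'.2, heq]
    subst hTT
    have : S = S' := by
      rw [← Finset.union_sdiff_cancel_left (hdisj T S h.2), heq,
        Finset.union_sdiff_cancel_left (hdisj T S' h'.2)]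
    rw [this]
  · intro F hF
    simp only [Finset.mem_filter, Finset.mem_univ, true_and] at hF
    have hsub : contr F ⊆ F := fun A hA => (mem_contr.1 hA).1
    refine ⟨⟨contr F, F \ contr F⟩, ?_, ?_⟩
    · simp only [Finset.mem_sigma, Finset.mem_filter, Finset.mem_univ, true_and,
        Finset.mem_powerset]
      exact ⟨contr_cay hF, diff_subset_cuts hF hsub fun A hA h => contr_bad hF hA h⟩
    · exact Finset.union_sdiff_of_subset hsub
  · rintro ⟨T, S⟩ h
    simp only [Finset.mem_sigma, Finset.mem_filter, Finset.mem_univ, true_and,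
      Finset.mem_powerset] at h ⊢
    rw [Finset.card_union_of_disjoint (hdisj T S h.2), h.1.card, Nat.add_sub_cancel_left]

end weights

section trees
set_option linter.unusedSectionVars false
variable {n : ℕ} {V : Type} [Fintype V]

structure TreeOn (lab : Fin (n+1) → V) (p : V → V) : Prop where
  inj : Function.Injective lab
  root : p (lab 0) = lab 0
  reach : ∀ v, ∃ k, p^[k] v = lab 0
  two : ∀ v, v ∉ Set.range lab → ∃ w₁ w₂, w₁ ≠ w₂ ∧ w₁ ≠ v ∧ w₂ ≠ v ∧ p w₁ = v ∧ p w₂ = v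

def De (p : V → V) (v w : V) : Prop := ∃ k, p^[k] v = w

open Classical in
def cl (lab : Fin (n+1) → V) (p : V → V) (v : V) : Finset (Fin (n+1)) :=
  Finset.univ.filter (fun w => De p (lab w) v)

lemma mem_cl {lab : Fin (n+1) → V} {p : V → V} {v : V} {w} : w ∈ cl lab p v ↔ De p (lab w) v := by
  classical
  simp [cl]

open Classical in
def fam (lab : Fin (n+1) → V) (p : V → V) : Finset (Finset (Fin (n+1))) :=
  Finset.univ.image (cl lab p)

lemma mem_fam {lab : Fin (n+1) → V} {p : V → V} {A} : A ∈ fam lab p ↔ ∃ v, cl lab p v = A := by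
  classical
  simp [fam]

lemma De.refl (p : V → V) (v : V) : De p v v := ⟨0, rfl⟩

lemma De.trans {p : V → V} {u v w : V} (h1 : De p u v) (h2 : De p v w) : De p u w := by
  obtain ⟨j, rfl⟩ := h1
  obtain ⟨k, rfl⟩ := h2
  exact ⟨k + j, Function.iterate_add_apply _ _ _ _⟩

lemma De.step {p : V → V} {v w : V} (h : De p v w) (hne : v ≠ w) : De p (p v) w := by
  obtain ⟨k, rfl⟩ := h
  cases k with
  | zero => exact (hne rfl).elim
  | succ k => exact ⟨k, (Function.iterate_succ_apply p k v).symm⟩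

lemma De.par (p : V → V) (v : V) : De p v (p v) := ⟨1, rfl⟩

lemma De.comparable {p : V → V} {u v w : V} (h1 : De p u v) (h2 : De p u w) : De p v w ∨ De p w v := by
  obtain ⟨j, rfl⟩ := h1
  obtain ⟨k, rfl⟩ := h2
  rcases le_total j k with h | h
  · left
    exact ⟨k - j, by rw [← Function.iterate_add_apply, Nat.sub_add_cancel h]⟩
  · right
    exact ⟨j - k, by rw [← Function.iterate_add_apply, Nat.sub_add_cancel h]⟩

/-- last step of a nontrivial descent -/
lemma De.last {p : V → V} {v w : V} (h : De p v w) (hne : v ≠ w) :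
    ∃ c, De p v c ∧ c ≠ w ∧ p c = w := by
  classical
  obtain ⟨k, hk, hmin⟩ : ∃ k, p^[k] v = w ∧ ∀ j < k, p^[j] v ≠ w :=
    ⟨Nat.find h, Nat.find_spec h, fun j hj => Nat.find_min h hj⟩
  cases k with
  | zero => exact (hne hk).elim
  | succ k =>
    refine ⟨p^[k] v, ⟨k, rfl⟩, hmin k (Nat.lt_succ_self k), ?_⟩
    rw [← hk, Function.iterate_succ_apply']

namespace TreeOn
variable {lab : Fin (n+1) → V} {p : V → V}

lemma iter_root (h : TreeOn lab p) (k : ℕ) : p^[k] (lab 0) = lab 0 := Function.iterate_fixed h.root k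

lemma antisymm (h : TreeOn lab p) {v w : V} (h1 : De p v w) (h2 : De p w v) : v = w := by
  obtain ⟨j, rfl⟩ := h1
  obtain ⟨k, hk⟩ := h2
  rw [← Function.iterate_add_apply] at hk
  rcases Nat.eq_zero_or_pos (k + j) with h0 | h0
  · have : j = 0 := by omega
    subst this; rfl
  · obtain ⟨i, hi⟩ := h.reach v
    have h3 : p^[(k+j) * i] v = v := by
      rw [Function.iterate_mul]
      exact Function.iterate_fixed hk i
    have h4 : v = lab 0 := by
      rw [← h3]
      have : (k + j) * i = ((k+j) * i - i) + i := by
        have : i ≤ (k+j) * i := Nat.le_mul_of_pos_left _ h0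
        omega
      rw [this, Function.iterate_add_apply, hi, h.iter_root]
    rw [h4, h.iter_root]

lemma root_de (h : TreeOn lab p) {w : V} (h1 : De p (lab 0) w) : w = lab 0 := by
  obtain ⟨k, rfl⟩ := h1
  exact h.iter_root k

lemma cl_nonempty_aux (h : TreeOn lab p) : ∀ (k : ℕ) (v : V), {x | De p x v}.ncard ≤ k → (cl lab p v).Nonempty := by
  intro k
  induction k with
  | zero =>
    intro v hv
    have h1 : {x | De p x v} = ∅ := by
      rw [← Set.ncard_eq_zero (Set.toFinite _)]; omega
    have : v ∈ {x | De p x v} := De.refl p v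
    rw [h1] at this
    exact this.elim
  | succ k ih =>
    intro v hv
    by_cases hl : v ∈ Set.range lab
    · obtain ⟨a, rfl⟩ := hl
      exact ⟨a, mem_cl.2 (De.refl _ _)⟩
    · obtain ⟨w, _, _, hw, _, hpw, _⟩ := h.two v hl
      have hwv : De p w v := ⟨1, hpw⟩
      have : {x | De p x w} ⊂ {x | De p x v} := by
        refine ⟨fun x hx => De.trans hx hwv, fun hs => ?_⟩
        have : De p v w := hs (De.refl p v)
        exact hw (h.antisymm hwv this)
      obtain ⟨a, ha⟩ := ih w (by
        have := Set.ncard_lt_ncard this (Set.toFinite _)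
        omega)
      exact ⟨a, mem_cl.2 ((mem_cl.1 ha).trans hwv)⟩

lemma cl_nonempty (h : TreeOn lab p) (v : V) : (cl lab p v).Nonempty := h.cl_nonempty_aux _ v le_rfl

lemma cl_mono {v w : V} (h1 : De p v w) : cl lab p v ⊆ cl lab p w :=
  fun _ hx => mem_cl.2 ((mem_cl.1 hx).trans h1)

lemma cl_ssub (h : TreeOn lab p) {v w : V} (h1 : De p v w) (hne : v ≠ w) : cl lab p v ⊂ cl lab p w := by
  refine ⟨cl_mono h1, fun hs => ?_⟩
  by_cases hl : w ∈ Set.range lab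
  · obtain ⟨a, rfl⟩ := hl
    exact hne (h.antisymm h1 (mem_cl.1 (hs (mem_cl.2 (De.refl _ _)))))
  · obtain ⟨w₁, w₂, h12, hw1, hw2, hp1, hp2⟩ := h.two w hl
    obtain ⟨c, hvc, hcw, hpc⟩ := h1.last hne
    obtain ⟨c', hcc', hc'w, hpc'⟩ : ∃ c', c' ≠ c ∧ c' ≠ w ∧ p c' = w := by
      by_cases hc : w₁ = c
      · exact ⟨w₂, by rw [← hc]; exact h12.symm, hw2, hp2⟩
      · exact ⟨w₁, hc, hw1, hp1⟩
    obtain ⟨x, hx⟩ := h.cl_nonempty c'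
    have hxc' := mem_cl.1 hx
    have hxc : De p (lab x) c :=
      (mem_cl.1 (hs (mem_cl.2 (hxc'.trans ⟨1, hpc'⟩)))).trans hvc
    rcases hxc'.comparable hxc with h2 | h2
    · have := h2.step hcc'
      rw [hpc'] at this
      exact hcw (h.antisymm ⟨1, hpc⟩ this)
    · have := h2.step hcc'.symm
      rw [hpc] at this
      exact hc'w (h.antisymm ⟨1, hpc'⟩ this)

lemma cl_le (h : TreeOn lab p) {v w : V} : cl lab p v ⊆ cl lab p w ↔ De p v w := by
  refine ⟨fun hs => ?_, cl_mono⟩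
  obtain ⟨x, hx⟩ := h.cl_nonempty v
  rcases (mem_cl.1 hx).comparable (mem_cl.1 (hs hx)) with h1 | h1
  · exact h1
  · by_cases hvw : v = w
    · subst hvw; exact h1
    · exact ((h.cl_ssub h1 (Ne.symm hvw)).2 hs).elim

lemma cl_inj (h : TreeOn lab p) {v w : V} (heq : cl lab p v = cl lab p w) : v = w :=
  h.antisymm (h.cl_le.1 heq.le) (h.cl_le.1 heq.ge)

lemma own (h : TreeOn lab p) (a : Fin (n+1)) : Own (fam lab p) (cl lab p (lab a)) a := by
  refine ⟨mem_cl.2 (De.refl _ _), fun B hB ha => ?_⟩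
  obtain ⟨v, rfl⟩ := mem_fam.1 hB
  exact cl_mono (mem_cl.1 ha)

lemma greg (h : TreeOn lab p) : IsGreg (fam lab p) where
  ne A hA := by
    obtain ⟨v, rfl⟩ := mem_fam.1 hA
    exact h.cl_nonempty v
  top := by
    refine mem_fam.2 ⟨lab 0, ?_⟩
    ext x
    simp only [mem_cl, Finset.mem_univ, iff_true]
    exact h.reach _
  lam A hA B hB := by
    obtain ⟨v, rfl⟩ := mem_fam.1 hA
    obtain ⟨w, rfl⟩ := mem_fam.1 hB
    by_cases hd : Disjoint (cl lab p v) (cl lab p w)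
    · exact Or.inr (Or.inr hd)
    · obtain ⟨x, hx, hx'⟩ := Finset.not_disjoint_iff.1 hd
      rcases (mem_cl.1 hx).comparable (mem_cl.1 hx') with h1 | h1
      · exact Or.inl (cl_mono h1)
      · exact Or.inr (Or.inl (cl_mono h1))
  zero A hA h0 := by
    obtain ⟨v, rfl⟩ := mem_fam.1 hA
    have := h.root_de (mem_cl.1 h0)
    subst this
    ext x
    simp only [mem_cl, Finset.mem_univ, iff_true]
    exact h.reach _
  sep a b hab := by
    by_contra hc
    push Not at hc
    have h1 := (hc _ (mem_fam.2 ⟨lab a, rfl⟩)).1 (mem_cl.2 (De.refl _ _))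
    have h2 := (hc _ (mem_fam.2 ⟨lab b, rfl⟩)).2 (mem_cl.2 (De.refl _ _))
    exact hab (h.inj (h.antisymm (mem_cl.1 h2) (mem_cl.1 h1)))

lemma par_ne (h : TreeOn lab p) {v : V} (hv : v ≠ lab 0) : v ≠ p v := by
  intro hc
  obtain ⟨k, hk⟩ := h.reach v
  rw [Function.iterate_fixed hc.symm] at hk
  exact hv hk

lemma par_ssub (h : TreeOn lab p) {v : V} (hv : v ≠ lab 0) : cl lab p v ⊂ cl lab p (p v) :=
  h.cl_ssub (De.par p v) (h.par_ne hv)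

lemma par_cover (h : TreeOn lab p) {v w : V} (hvw : cl lab p v ⊂ cl lab p w) : cl lab p (p v) ⊆ cl lab p w :=
  cl_mono ((h.cl_le.1 hvw.1).step (by rintro rfl; exact hvw.2 subset_rfl))

lemma card_fam (h : TreeOn lab p) : (fam lab p).card = Fintype.card V := by
  classical
  rw [fam, Finset.card_image_of_injective _ (fun v w => h.cl_inj), Finset.card_univ]

/-- an isomorphism between two trees with the same family -/
lemma exists_iso (h : TreeOn lab p) {p' : V → V} (h' : TreeOn lab p') (heq : fam lab p = fam lab p') :
    ∃ e : V → V, Function.Injective e ∧ (∀ v, cl lab p' (e v) = cl lab p v) ∧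
      (∀ a, e (lab a) = lab a) ∧ ∀ v, e (p v) = p' (e v) := by
  have : ∀ v, ∃ w, cl lab p' w = cl lab p v := fun v => by
    rw [← mem_fam, ← heq]; exact mem_fam.2 ⟨v, rfl⟩
  choose e he using this
  have hlab : ∀ a, e (lab a) = lab a := fun a => by
    apply h'.cl_inj
    rw [he]
    have h2 := h'.own a
    rw [← heq] at h2
    exact Own.unique (mem_fam.2 ⟨_, rfl⟩) (by rw [heq]; exact mem_fam.2 ⟨_, rfl⟩) (h.own a) h2
  have hinj : Function.Injective e := fun v w hvw => h.cl_inj (by rw [← he, ← he, hvw])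
  refine ⟨e, hinj, he, hlab, fun v => ?_⟩
  by_cases hv : v = lab 0
  · subst hv
    rw [h.root, hlab, h'.root]
  · have hev : e v ≠ lab 0 := fun hc => hv (hinj (by rw [hc, hlab]))
    apply h'.cl_inj
    apply Finset.Subset.antisymm
    · obtain ⟨w, hw⟩ : ∃ w, cl lab p w = cl lab p' (p' (e v)) := by
        rw [← mem_fam, heq]; exact mem_fam.2 ⟨_, rfl⟩
      rw [he, ← hw]
      apply h.par_cover
      rw [hw, ← he]
      exact h'.par_ssub hev
    · apply h'.par_cover
      rw [he, he]
      exact h.par_ssub hv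

lemma reach_lt (h : TreeOn lab p) (v : V) : ∃ k < Fintype.card V, p^[k] v = lab 0 := by
  classical
  have hr := h.reach v
  refine ⟨Nat.find hr, ?_, Nat.find_spec hr⟩
  by_contra hc
  push Not at hc
  have hinj : Set.InjOn (fun k => p^[k] v) (Finset.range (Nat.find hr + 1)) := by
    have main : ∀ i j, i < j → j ≤ Nat.find hr → p^[i] v ≠ p^[j] v := by
      intro i j hij hj heq
      refine Nat.find_min hr (m := Nat.find hr - j + i) (by omega) ?_
      rw [Function.iterate_add_apply, heq, ← Function.iterate_add_apply, Nat.sub_add_cancel hj]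
      exact Nat.find_spec hr
    intro i hi j hj heq
    simp only [Finset.coe_range, Set.mem_Iio] at hi hj
    rcases lt_trichotomy i j with h1 | h1 | h1
    · exact (main i j h1 (by omega) heq).elim
    · exact h1
    · exact (main j i h1 (by omega) heq.symm).elim
  have := Finset.card_le_card_of_injOn (s := Finset.range (Nat.find hr + 1)) (t := Finset.univ)
    (fun k => p^[k] v) (by simp) hinj
  rw [Finset.card_range, Finset.card_univ] at this
  omega

end TreeOn

/-- every Greg family is the family of a tree -/
lemma realize {F : Finset (Finset (Fin (n+1)))} (hF : IsGreg F) (lab : Fin (n+1) → V)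
    (e : V → Finset (Fin (n+1))) (hinj : Function.Injective e) (he : ∀ A, A ∈ F ↔ ∃ v, e v = A)
    (hlab : ∀ a, Own F (e (lab a)) a) : ∃ p : V → V, TreeOn lab p ∧ cl lab p = e := by
  classical
  have hmem : ∀ v, e v ∈ F := fun v => (he _).2 ⟨v, rfl⟩
  have hex : ∀ v, ∃ w, (e v = Finset.univ ∧ w = v) ∨
      (e v ⊂ e w ∧ ∀ w', e v ⊂ e w' → e w ⊆ e w') := by
    intro v
    by_cases hv : e v = Finset.univ
    · exact ⟨v, Or.inl ⟨hv, rfl⟩⟩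
    · obtain ⟨r, hr⟩ := (he _).1 hF.top
      obtain ⟨w, hw, hmin⟩ := Finset.exists_min_image (Finset.univ.filter (fun w => e v ⊂ e w))
        (fun w => (e w).card) ⟨r, by simp [hr, Finset.ssubset_univ_iff, hv]⟩
      simp only [Finset.mem_filter, Finset.mem_univ, true_and] at hw hmin
      refine ⟨w, Or.inr ⟨hw, fun w' hw' => ?_⟩⟩
      obtain ⟨x, hx⟩ := hF.ne _ (hmem v)
      rcases hF.chain (hmem w) (hmem w') (hw.1 hx) (hw'.1 hx) with h | h
      · exact h
      · exact (Finset.eq_of_subset_of_card_le h (hmin w' hw')).ge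
  choose p hp using hex
  have hle : ∀ v, e v ⊆ e (p v) := fun v => by
    rcases hp v with h | h
    · rw [h.2]
    · exact h.1.1
  have hDe1 : ∀ k v, e v ⊆ e (p^[k] v) := by
    intro k
    induction k with
    | zero => intro v; exact subset_rfl
    | succ k ih => intro v; rw [Function.iterate_succ_apply]; exact (hle v).trans (ih _)
  have hDe2 : ∀ k v w, (e v)ᶜ.card ≤ k → e v ⊆ e w → De p v w := by
    intro k
    induction k with
    | zero =>
      intro v w hk hvw
      have : e v = Finset.univ := by simpa using hk
      rw [this, Finset.univ_subset_iff] at hvw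
      exact ⟨0, hinj (by simp [this, hvw])⟩
    | succ k ih =>
      intro v w hk hvw
      by_cases heq : e v = e w
      · exact ⟨0, hinj heq⟩
      · have hs := hvw.ssubset_of_ne heq
        rcases hp v with h | h
        · exact (hs.2 (h.1 ▸ Finset.subset_univ _)).elim
        · have := ih (p v) w (by
            have : (e (p v))ᶜ.card < (e v)ᶜ.card := Finset.card_lt_card (by simpa using h.1)
            omega) (h.2 w hs)
          exact (De.par p v).trans this
  have hDe : ∀ v w, De p v w ↔ e v ⊆ e w := fun v w =>
    ⟨fun ⟨k, hk⟩ => hk ▸ hDe1 k v, hDe2 _ v w le_rfl⟩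
  have hcl : cl lab p = e := by
    funext v
    ext x
    rw [mem_cl, hDe]
    exact ⟨fun h => h (hlab x).1, fun h => (hlab x).2 _ (hmem v) h⟩
  have h0 : e (lab 0) = Finset.univ := hF.zero _ (hmem _) (hlab 0).1
  refine ⟨p, ⟨?_, ?_, ?_, ?_⟩, hcl⟩
  · intro a b hab
    exact hF.own_inj (hlab a) (hab ▸ hlab b)
  · rcases hp (lab 0) with h | h
    · exact h.2
    · exact (h.1.2 (h0 ▸ Finset.subset_univ _)).elim
  · intro v
    exact (hDe v (lab 0)).2 (h0 ▸ Finset.subset_univ _)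
  · intro v hv
    have hchild : ∀ x ∈ e v, ∃ w, w ≠ v ∧ p w = v ∧ x ∈ e w := by
      intro x hx
      have h1 : De p (lab x) v := (hDe _ _).2 ((hlab x).2 _ (hmem v) hx)
      obtain ⟨c, hc1, hc2, hc3⟩ := h1.last (fun h => hv ⟨x, h⟩)
      exact ⟨c, hc2, hc3, (hDe _ _).1 hc1 (hlab x).1⟩
    obtain ⟨x, hx⟩ := hF.ne _ (hmem v)
    obtain ⟨w, hw, hpw, hxw⟩ := hchild x hx
    have hs : e w ⊂ e v := (hpw ▸ hle w : e w ⊆ e v).ssubset_of_ne fun h => hw (hinj h)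
    obtain ⟨y, hy, hyw⟩ := Finset.exists_of_ssubset hs
    obtain ⟨w', hw', hpw', hyw'⟩ := hchild y hy
    exact ⟨w, w', by rintro rfl; exact hyw hyw', hw, hw', hpw, hpw'⟩

lemma sInf_eq_mn {A : Finset (Fin (n+1))} (hA : A.Nonempty) (q : Fin (n+1) → Prop)
    (hq : ∀ w, q w ↔ w ∈ A) : sInf {j : ℕ | ∃ w : Fin (n+1), w.val = j ∧ q w} = (mn A).val := by
  have hm : (mn A).val ∈ {j : ℕ | ∃ w : Fin (n+1), w.val = j ∧ q w} :=
    ⟨mn A, rfl, (hq _).2 (mn_mem hA)⟩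
  apply le_antisymm
  · exact Nat.sInf_le hm
  · obtain ⟨w, hw, hw'⟩ := Nat.sInf_mem (⟨_, hm⟩ : Set.Nonempty _)
    rw [← hw]
    exact mn_le ((hq w).1 hw')

lemma TreeOn.imprF_iff {lab : Fin (n+1) → V} {p : V → V} (h : TreeOn lab p) (a : Fin (n+1)) :
    a ∈ imprF (fam lab p) ↔ (mn (cl lab p (lab a))).val ≠ a.val := by
  rw [mem_imprF, not_iff_comm]
  push Not
  have ho := h.own a
  constructor
  · intro h1
    have h1 := Fin.ext h1
    exact ⟨_, mem_fam.2 ⟨lab a, rfl⟩, ho.1, fun z hz => by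
      calc a = _ := h1.symm
        _ ≤ z := mn_le hz⟩
  · rintro ⟨A, hA, h1, h2⟩
    congr 1
    exact mn_eq ho.1 fun z hz => h2 z (ho.2 A hA h1 hz)

end trees

section final
variable {n : ℕ}

/-! ### Cayley trees -/

lemma cayley_treeOn (T : CayleyTree (n+1)) : TreeOn (n := n) (fun a : Fin (n+1) => a) T.1 where
  inj := fun _ _ h => h
  root := T.2.1 0 rfl
  reach v := by
    obtain ⟨k, -, hk⟩ := T.2.2 v
    exact ⟨k, Fin.ext hk⟩
  two v hv := (hv ⟨v, rfl⟩).elim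

def famC (T : CayleyTree (n+1)) : Finset (Finset (Fin (n+1))) := fam (fun a : Fin (n+1) => a) T.1

lemma famC_cay (T : CayleyTree (n+1)) : IsCay (famC T) where
  toIsGreg := (cayley_treeOn T).greg
  own A hA := by
    obtain ⟨v, rfl⟩ := mem_fam.1 hA
    exact ⟨v, (cayley_treeOn T).own v⟩

lemma cayley_beta (T : CayleyTree (n+1)) (a : Fin (n+1)) :
    T.beta a = (mn (cl (fun a : Fin (n+1) => a) T.1 a)).val :=
  sInf_eq_mn ((cayley_treeOn T).cl_nonempty a) (fun w => T.Desc w a)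
    (fun w => by rw [mem_cl]; exact Iff.rfl)

lemma cayley_impp (T : CayleyTree (n+1)) : T.impp = (imprF (famC T)).card := by
  classical
  rw [CayleyTree.impp, ← Set.ncard_coe_finset]
  congr 1
  ext a
  have := (cayley_treeOn T).imprF_iff a
  simp only [Set.mem_ofPred_eq, CayleyTree.ImproperParent, cayley_beta, Finset.mem_coe, famC]
  exact this.symm

lemma cayley_impe (T : CayleyTree (n+1)) : T.impe = (cuts (famC T)).card := by
  classical
  have h := cayley_treeOn T
  rw [card_cuts (famC_cay T) (cl (fun a : Fin (n+1) => a) T.1) T.1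
    (fun c => mem_fam.2 ⟨c, rfl⟩) h.own]
  · rw [CayleyTree.impe]
    congr 1
    ext c
    simp only [Set.mem_ofPred_eq, CayleyTree.ImproperEdge, cayley_beta, Fin.lt_def]
    rw [Ne, Ne, Fin.ext_iff]
    rfl
  · intro c hc
    refine ⟨h.par_ssub hc, fun B hB hcB => ?_⟩
    obtain ⟨v, rfl⟩ := mem_fam.1 hB
    exact h.par_cover hcB

lemma famC_inj (T T' : CayleyTree (n+1)) (heq : famC T = famC T') : T = T' := by
  obtain ⟨e, -, -, h1, h2⟩ := (cayley_treeOn T).exists_iso (cayley_treeOn T') heq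
  apply Subtype.ext
  funext v
  have := h2 v
  rwa [h1, h1] at this

lemma famC_surj {F : Finset (Finset (Fin (n+1)))} (hF : IsCay F) :
    ∃ T : CayleyTree (n+1), famC T = F := by
  classical
  choose M hM hO using hF.toIsGreg.exists_min
  obtain ⟨p, hp, hcl⟩ := realize hF.toIsGreg (fun a : Fin (n+1) => a) M
    (fun a b h => hF.toIsGreg.own_inj (hO a) (h ▸ hO b))
    (fun A => ⟨fun hA => by
      obtain ⟨a, ha⟩ := hF.own A hA
      exact ⟨a, Own.unique (hM a) hA (hO a) ha⟩, by rintro ⟨a, rfl⟩; exact hM a⟩) hO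
  refine ⟨⟨p, ?_, ?_⟩, ?_⟩
  · intro v hv
    have : v = 0 := Fin.ext hv
    subst this
    exact hp.root
  · intro v
    obtain ⟨k, hk, hk'⟩ := hp.reach_lt v
    rw [Fintype.card_fin] at hk
    exact ⟨k, hk, by rw [hk']; rfl⟩
  · ext A
    change A ∈ fam (fun a : Fin (n+1) => a) p ↔ A ∈ F
    rw [mem_fam]
    simp only [hcl]
    constructor
    · rintro ⟨a, rfl⟩; exact hM a
    · intro hA
      obtain ⟨a, ha⟩ := hF.own A hA
      exact ⟨a, Own.unique (hM a) hA (hO a) ha⟩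

lemma card_cuts_le {F : Finset (Finset (Fin (n+1)))} (hF : IsCay F) : (cuts F).card ≤ n + 1 := by
  obtain ⟨T, rfl⟩ := famC_surj hF
  rw [← cayley_impe, CayleyTree.impe]
  have := Set.ncard_le_ncard (Set.subset_univ {c | T.ImproperEdge c}) (Set.toFinite _)
  rwa [Set.ncard_univ, Nat.card_eq_fintype_card, Fintype.card_fin] at this

lemma greg_card {F : Finset (Finset (Fin (n+1)))} (hF : IsGreg F) :
    n + 1 ≤ F.card ∧ F.card ≤ (n + 1) + (n + 1) := by
  have hsub : contr F ⊆ F := fun A hA => (mem_contr.1 hA).1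
  have h1 := (contr_cay hF).card
  have h2 := card_cuts_le (contr_cay hF)
  have h3 := Finset.card_le_card (diff_subset_cuts hF hsub fun A hA h => contr_bad hF hA h)
  have h4 := Finset.card_sdiff_add_card_eq_card hsub
  omega

/-! ### Greg trees -/

variable {m : ℕ}

lemma gregRoot_iff (v : Fin (n+1) ⊕ Fin m) : gregRoot v ↔ v = Sum.inl 0 := by
  constructor
  · rintro ⟨w, hw, rfl⟩
    have : w = 0 := Fin.ext hw
    rw [this]
  · rintro rfl
    exact ⟨0, rfl, rfl⟩

lemma greg_treeOn {p : Fin (n+1) ⊕ Fin m → Fin (n+1) ⊕ Fin m} (h : GregCond (n+1) m p) :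
    TreeOn (n := n) Sum.inl p where
  inj := Sum.inl_injective
  root := h.1 _ ((gregRoot_iff _).2 rfl)
  reach v := by
    obtain ⟨k, -, hk⟩ := h.2.1 v
    exact ⟨k, (gregRoot_iff _).1 hk⟩
  two v hv := by
    rcases v with a | u
    · exact (hv ⟨a, rfl⟩).elim
    · have := h.2.2.1 u
      obtain ⟨a, b, ha, hb, hab⟩ := (Set.one_lt_ncard_iff (Set.toFinite _)).1 this
      exact ⟨a, b, hab, ha.1, hb.1, ha.2, hb.2⟩

lemma gregCond_of {p : Fin (n+1) ⊕ Fin m → Fin (n+1) ⊕ Fin m} (h : TreeOn (n := n) Sum.inl p)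
    (hk : StrictMono (GregRaw.key p)) : GregCond (n+1) m p := by
  refine ⟨fun v hv => ?_, fun v => ?_, fun u => ?_, fun u w => hk.lt_iff_lt.symm⟩
  · rw [(gregRoot_iff _).1 hv]
    exact h.root
  · obtain ⟨k, hk, hk'⟩ := h.reach_lt v
    rw [Fintype.card_sum, Fintype.card_fin, Fintype.card_fin] at hk
    exact ⟨k, hk, (gregRoot_iff _).2 hk'⟩
  · obtain ⟨a, b, hab, ha, hb, ha', hb'⟩ := h.two (Sum.inr u) (by simp)
    exact (Set.one_lt_ncard_iff (Set.toFinite _)).2 ⟨a, b, ⟨ha, ha'⟩, ⟨hb, hb'⟩, hab⟩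

lemma greg_beta {p : Fin (n+1) ⊕ Fin m → Fin (n+1) ⊕ Fin m} (h : TreeOn (n := n) Sum.inl p) (a) :
    GregRaw.beta p a = (mn (cl Sum.inl p a)).val :=
  sInf_eq_mn (h.cl_nonempty a) (fun w => GregRaw.Desc p (Sum.inl w) a) (fun w => mem_cl.symm)

lemma depth_spec {p : Fin (n+1) ⊕ Fin m → Fin (n+1) ⊕ Fin m} (h : TreeOn (n := n) Sum.inl p) (v) :
    p^[GregRaw.depth p v] v = Sum.inl 0 := by
  have : GregRaw.depth p v ∈ {k : ℕ | gregRoot (p^[k] v)} := by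
    apply Nat.sInf_mem
    obtain ⟨k, hk⟩ := h.reach v
    exact ⟨k, (gregRoot_iff _).2 hk⟩
  exact (gregRoot_iff _).1 this

lemma depth_le {p : Fin (n+1) ⊕ Fin m → Fin (n+1) ⊕ Fin m} {v} {k : ℕ}
    (hk : p^[k] v = Sum.inl 0) : GregRaw.depth p v ≤ k :=
  Nat.sInf_le ((gregRoot_iff _).2 hk)

lemma depth_lt {p : Fin (n+1) ⊕ Fin m → Fin (n+1) ⊕ Fin m} (h : TreeOn (n := n) Sum.inl p) (v) :
    GregRaw.depth p v < n + 1 + m := by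
  obtain ⟨k, hk, hk'⟩ := h.reach_lt v
  rw [Fintype.card_sum, Fintype.card_fin, Fintype.card_fin] at hk
  exact lt_of_le_of_lt (depth_le hk') hk

lemma depth_de {p : Fin (n+1) ⊕ Fin m → Fin (n+1) ⊕ Fin m} (h : TreeOn (n := n) Sum.inl p)
    {u w : Fin m} (hd : De p (Sum.inr u) (Sum.inr w))
    (heq : GregRaw.depth p (Sum.inr u) = GregRaw.depth p (Sum.inr w)) : u = w := by
  obtain ⟨j, hj⟩ := hd
  have hs := depth_spec h (Sum.inr u)
  rcases Nat.eq_zero_or_pos j with h0 | h0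
  · subst h0
    exact Sum.inr_injective hj
  · exfalso
    set d := GregRaw.depth p (Sum.inr u) with hd
    by_cases hjd : j ≤ d
    · have : p^[d - j] (Sum.inr w) = Sum.inl 0 := by
        rw [← hj, ← Function.iterate_add_apply, Nat.sub_add_cancel hjd, hs]
      have := depth_le this
      have : d ≠ 0 := by omega
      omega
    · have h1 : j = (j - d) + d := by omega
      rw [h1, Function.iterate_add_apply, hs, h.iter_root] at hj
      exact absurd hj (by simp)

lemma key_inj {p : Fin (n+1) ⊕ Fin m → Fin (n+1) ⊕ Fin m} (h : TreeOn (n := n) Sum.inl p) :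
    Function.Injective (GregRaw.key p) := by
  intro u w heq
  unfold GregRaw.key at heq
  have hu := depth_lt h (Sum.inr u)
  have hw := depth_lt h (Sum.inr w)
  have h1 : GregRaw.beta p (Sum.inr u) = GregRaw.beta p (Sum.inr w) := by
    have := congrArg (fun x : ℕ => x / (n + 1 + m + 1)) heq
    beta_reduce at this
    rwa [Nat.add_comm, Nat.add_mul_div_right _ _ (by omega), Nat.div_eq_of_lt (by omega),
      Nat.add_comm (GregRaw.beta p (Sum.inr w) * _), Nat.add_mul_div_right _ _ (by omega),
      Nat.div_eq_of_lt (by omega), Nat.zero_add, Nat.zero_add] at this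
  have h2 : GregRaw.depth p (Sum.inr u) = GregRaw.depth p (Sum.inr w) := by
    rw [h1] at heq; omega
  rw [greg_beta h, greg_beta h] at h1
  have h1 := Fin.ext h1
  have e1 := mn_mem (h.cl_nonempty (Sum.inr u))
  have e2 := mn_mem (h.cl_nonempty (Sum.inr w))
  rw [← h1] at e2
  rcases (mem_cl.1 e1).comparable (mem_cl.1 e2) with hd | hd
  · exact depth_de h hd h2
  · exact (depth_de h hd h2.symm).symm

/-- keys are preserved by isomorphisms -/
lemma key_iso {p p' : Fin (n+1) ⊕ Fin m → Fin (n+1) ⊕ Fin m} (h : TreeOn (n := n) Sum.inl p)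
    (h' : TreeOn (n := n) Sum.inl p')
    {e : Fin (n+1) ⊕ Fin m → Fin (n+1) ⊕ Fin m} (hinj : Function.Injective e)
    (hcl : ∀ v, cl Sum.inl p' (e v) = cl Sum.inl p v)
    (hlab : ∀ a, e (Sum.inl a) = Sum.inl a) (hp : ∀ v, e (p v) = p' (e v)) {u w : Fin m}
    (huw : e (Sum.inr u) = Sum.inr w) : GregRaw.key p u = GregRaw.key p' w := by
  unfold GregRaw.key
  rw [greg_beta h, greg_beta h', ← huw, hcl]
  congr 1
  unfold GregRaw.depth
  congr 1
  ext k
  have hsc : Function.Semiconj e p p' := hp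
  simp only [Set.mem_ofPred_eq, gregRoot_iff]
  rw [← (hsc.iterate_right k).eq, ← hlab 0, hinj.eq_iff, hlab]

lemma greg_unique {p p' : Fin (n+1) ⊕ Fin m → Fin (n+1) ⊕ Fin m} (h : GregCond (n+1) m p)
    (h' : GregCond (n+1) m p')
    (heq : fam (n := n) Sum.inl p = fam (n := n) Sum.inl p') : p = p' := by
  have ht := greg_treeOn h
  have ht' := greg_treeOn h'
  obtain ⟨e, hinj, hcl, hlab, hp⟩ := ht.exists_iso ht' heq
  have : ∀ u : Fin m, ∃ w : Fin m, e (Sum.inr u) = Sum.inr w := by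
    intro u
    rcases hu : e (Sum.inr u) with a | w
    · rw [← hlab a] at hu
      exact absurd (hinj hu) (by simp)
    · exact ⟨w, rfl⟩
  choose f hf using this
  have hmono : StrictMono f := by
    intro u w huw
    rw [h'.2.2.2, ← key_iso ht ht' hinj hcl hlab hp (hf u), ← key_iso ht ht' hinj hcl hlab hp (hf w),
      ← h.2.2.2]
    exact huw
  have hid : f = id := by
    funext u
    have hs : Function.Surjective f := Finite.surjective_of_injective hmono.injective
    have := Subsingleton.elim (hmono.orderIsoOfSurjective f hs) (OrderIso.refl (Fin m))
    exact congrArg (fun g : Fin m ≃o Fin m => g u) this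
  have he : ∀ v, e v = v := by
    rintro (a | u)
    · exact hlab a
    · rw [hf, hid]; rfl
  funext v
  have := hp v
  rwa [he, he] at this

def famG (G : GregTree (n+1)) : Finset (Finset (Fin (n+1))) := fam (n := n) Sum.inl G.2.1

lemma famG_card (G : GregTree (n+1)) : (famG G).card = n + 1 + G.1.val := by
  rw [famG, (greg_treeOn G.2.2).card_fam, Fintype.card_sum, Fintype.card_fin, Fintype.card_fin]

lemma famG_inj (G G' : GregTree (n+1)) (heq : famG G = famG G') : G = G' := by
  have hc := famG_card G
  rw [heq, famG_card] at hc
  obtain ⟨m, p, hp⟩ := G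
  obtain ⟨m', p', hp'⟩ := G'
  have : m = m' := Fin.ext (by simp only at hc; omega)
  subst this
  have := greg_unique hp hp' heq
  subst this
  rfl

lemma greg_impp (G : GregTree (n+1)) : G.impp = (imprF (famG G)).card := by
  classical
  have h := greg_treeOn G.2.2
  rw [GregTree.impp, ← Set.ncard_coe_finset]
  congr 1
  ext a
  have := h.imprF_iff a
  simp only [Set.mem_ofPred_eq, GregTree.ImproperParent, GregTree.beta, greg_beta h,
    Finset.mem_coe, famG]
  exact this.symm

lemma famG_surj {F : Finset (Finset (Fin (n+1)))} (hF : IsGreg F) :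
    ∃ G : GregTree (n+1), famG G = F := by
  classical
  obtain ⟨hc1, hc2⟩ := greg_card hF
  choose M hM hO using hF.exists_min
  have hMinj : Function.Injective M := fun a b h => hF.own_inj (hO a) (h ▸ hO b)
  let U := F \ Finset.univ.image M
  have hU : U.card = F.card - (n+1) := by
    rw [Finset.card_sdiff_of_subset (by intro A; simp only [Finset.mem_image]; rintro ⟨a, -, rfl⟩; exact hM a),
      Finset.card_image_of_injective _ hMinj, Finset.card_univ, Fintype.card_fin]
  let m := F.card - (n+1)
  let f : Fin m ≃ U := (U.equivFinOfCardEq hU).symm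
  have hfF : ∀ u, (f u).1 ∈ F := fun u => (Finset.mem_sdiff.1 (f u).2).1
  have hfM : ∀ u a, M a ≠ (f u).1 := fun u a h =>
    (Finset.mem_sdiff.1 (f u).2).2 (Finset.mem_image.2 ⟨a, Finset.mem_univ _, h⟩)
  -- realization for an arbitrary indexing
  have real : ∀ g : Fin m ≃ U, ∃ p : Fin (n+1) ⊕ Fin m → Fin (n+1) ⊕ Fin m,
      TreeOn (n := n) Sum.inl p ∧ cl (n := n) Sum.inl p = Sum.elim M (fun u => (g u).1) := by
    intro g
    have hgM : ∀ u a, M a ≠ (g u).1 := fun u a h =>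
      (Finset.mem_sdiff.1 (g u).2).2 (Finset.mem_image.2 ⟨a, Finset.mem_univ _, h⟩)
    refine realize hF Sum.inl (Sum.elim M (fun u => (g u).1)) ?_ ?_ hO
    · rintro (a | u) (b | w) h
      · rw [hMinj h]
      · exact (hgM w a h).elim
      · exact (hgM u b h.symm).elim
      · rw [g.injective (Subtype.ext h)]
    · intro A
      constructor
      · intro hA
        by_cases hAM : A ∈ Finset.univ.image M
        · obtain ⟨a, -, rfl⟩ := Finset.mem_image.1 hAM
          exact ⟨Sum.inl a, rfl⟩
        · refine ⟨Sum.inr (g.symm ⟨A, Finset.mem_sdiff.2 ⟨hA, hAM⟩⟩), ?_⟩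
          simp
      · rintro ⟨a | u, rfl⟩
        · exact hM a
        · exact (Finset.mem_sdiff.1 (g u).2).1
  have hfam : ∀ (g : Fin m ≃ U) (p : Fin (n+1) ⊕ Fin m → Fin (n+1) ⊕ Fin m),
      cl (n := n) Sum.inl p = Sum.elim M (fun u => (g u).1) → fam (n := n) Sum.inl p = F := by
    intro g p hcl
    ext A
    rw [mem_fam, hcl]
    constructor
    · rintro ⟨a | u, rfl⟩
      · exact hM a
      · exact (Finset.mem_sdiff.1 (g u).2).1
    · intro hA
      by_cases hAM : A ∈ Finset.univ.image M
      · obtain ⟨a, -, rfl⟩ := Finset.mem_image.1 hAM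
        exact ⟨Sum.inl a, rfl⟩
      · refine ⟨Sum.inr (g.symm ⟨A, Finset.mem_sdiff.2 ⟨hA, hAM⟩⟩), ?_⟩
        simp
  obtain ⟨p0, hp0, hcl0⟩ := real f
  let σ := Tuple.sort (GregRaw.key p0)
  have hσ : StrictMono (GregRaw.key p0 ∘ σ) :=
    (Tuple.monotone_sort (GregRaw.key p0)).strictMono_of_injective
      ((key_inj hp0).comp σ.injective)
  obtain ⟨p, hp, hcl⟩ := real (σ.trans f)
  have hfe : fam (n := n) Sum.inl p = fam (n := n) Sum.inl p0 := by
    rw [hfam _ p hcl, hfam _ p0 hcl0]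
  obtain ⟨e, hinj, hecl, hlab, hpe⟩ := hp.exists_iso hp0 hfe
  have hkey : GregRaw.key p = GregRaw.key p0 ∘ σ := by
    funext u
    refine key_iso hp hp0 hinj hecl hlab hpe ?_
    apply hp0.cl_inj
    rw [hecl, hcl, hcl0]
    rfl
  refine ⟨⟨⟨m, by omega⟩, p, gregCond_of hp (hkey ▸ hσ)⟩, hfam _ p hcl⟩

end final


/-- For every `n ≥ 1`, as polynomials in `y = X 0` and `t = X 1`,
`Σ_{G ∈ G_{n+1}} y^{unl G} t^{impp G}
  = Σ_{T ∈ C_{n+1}} (y+1)^{impe T - impp T} (y+t)^{impp T}`. -/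
theorem sum_gregTree_eq_sum_cayleyTree (n : ℕ) (hn : 1 ≤ n) :
    ∑ G : GregTree (n + 1), (X 0 : MvPolynomial (Fin 2) ℚ) ^ G.unl * X 1 ^ G.impp
      = ∑ T : CayleyTree (n + 1),
          ((X 0 : MvPolynomial (Fin 2) ℚ) + 1) ^ (T.impe - T.impp)
            * (X 0 + X 1) ^ T.impp := by
  classical
  have hG : ∑ G : GregTree (n + 1), (X 0 : MvPolynomial (Fin 2) ℚ) ^ G.unl * X 1 ^ G.impp
      = ∑ F ∈ Finset.univ.filter (fun F : Finset (Finset (Fin (n+1))) => IsGreg F),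
        (X 0 : MvPolynomial (Fin 2) ℚ) ^ (F.card - (n+1)) * X 1 ^ (imprF F).card := by
    refine Finset.sum_bij (fun G _ => famG G) ?_ ?_ ?_ ?_
    · intro G _
      simp only [Finset.mem_filter, Finset.mem_univ, true_and]
      exact (greg_treeOn G.2.2).greg
    · intro G _ G' _ h
      exact famG_inj G G' h
    · intro F hF
      obtain ⟨G, hG⟩ := famG_surj (Finset.mem_filter.1 hF).2
      exact ⟨G, Finset.mem_univ _, hG⟩
    · intro G _
      rw [greg_impp, famG_card, Nat.add_sub_cancel_left]
      rfl
  rw [hG, sum_families]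
  symm
  refine Finset.sum_bij (fun T _ => famC T) ?_ ?_ ?_ ?_
  · intro T _
    simp only [Finset.mem_filter, Finset.mem_univ, true_and]
    exact famC_cay T
  · intro T _ T' _ h
    exact famC_inj T T' h
  · intro F hF
    obtain ⟨T, hT⟩ := famC_surj (Finset.mem_filter.1 hF).2
    exact ⟨T, Finset.mem_univ _, hT⟩
  · intro T _
    rw [cayley_impp, cayley_impe]

end
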